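/- Fix integers d ≥ 1, r ≥ 0 and a strict partition λ with d parts such that λ_i ≤ r + 2d − 2i + 1 for all i. Then the number of reduced words of w^λ equals the number of standard Young tableaux of shifted shape λ: |Red(w^λ)| = |SYT(λ)|. -/

import Mathlib

open scoped BigOperators

namespace BST

/-- `lam` (1-indexed, with `d` parts) is a strict partition: strictly decreasing
positive parts `lam 1 > lam 2 > ⋯ > lam d > 0`. -/
def IsStrictPartition (d : ℕ) (lam : ℕ → ℕ) : Prop :=
  (∀ i : ℕ, 1 ≤ i → i < d → lam (i + 1) < lam i) ∧ 1 ≤ lam d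

/-- The size `|λ| = λ_1 + ⋯ + λ_d`. -/
def sizeP (d : ℕ) (lam : ℕ → ℕ) : ℕ := ∑ i ∈ Finset.Icc 1 d, lam i

/-- The shifted diagram `D(λ) ⊆ ℤ × ℤ`: row `i` (1 ≤ i ≤ d) occupies columns
`i - d, …, λ_i + i - d - 1`. -/
def Diagram (d : ℕ) (lam : ℕ → ℕ) : Set (ℤ × ℤ) :=
  {p : ℤ × ℤ | 1 ≤ p.1 ∧ p.1 ≤ (d : ℤ) ∧ p.1 - (d : ℤ) ≤ p.2 ∧
    p.2 + (d : ℤ) + 1 ≤ (lam p.1.toNat : ℤ) + p.1}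

/-- The hook `H(i,c)`. -/
def Hook (d : ℕ) (lam : ℕ → ℕ) (i c : ℤ) : Set (ℤ × ℤ) :=
  {(i, c)} ∪ {p ∈ Diagram d lam | (p.1 = i ∧ c < p.2) ∨ (p.2 = c ∧ i < p.1)} ∪
    {p ∈ Diagram d lam | c < 0 ∧ p.1 = (d : ℤ) + 1 + c}

/-- The extended hook `H̃(i,c)`. -/
def ExtHook (d : ℕ) (lam : ℕ → ℕ) (i c : ℤ) : Set (ℤ × ℤ) :=
  Hook d lam i c ∪ {p : ℤ × ℤ | c < 0 ∧ p = ((d : ℤ) + 1 + c, c)}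

/-- The extended diagram `D(λ) ∪ {(i, i - d - 1) : 1 ≤ i ≤ d}`. -/
def ExtDiagram (d : ℕ) (lam : ℕ → ℕ) : Set (ℤ × ℤ) :=
  Diagram d lam ∪ {p : ℤ × ℤ | 1 ≤ p.1 ∧ p.1 ≤ (d : ℤ) ∧ p.2 = p.1 - ((d : ℤ) + 1)}

/-- The extended filling `B̃`, with `B̃(i, i - d - 1) = B(i, 0)`. -/
def ExtFilling (d : ℕ) (B : ℤ × ℤ → ℕ) : ℤ × ℤ → ℕ :=
  fun p => if p.2 = p.1 - ((d : ℤ) + 1) then B (p.1, 0) else B p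

/-- The rank function `rk(i,c)`. -/
def rk (d : ℕ) (lam : ℕ → ℕ) (i c : ℤ) : ℤ :=
  if 0 ≤ c then (lam i.toNat : ℤ) - d + i - c
  else (lam i.toNat : ℤ) - d + i + (lam ((d : ℤ) + 1 + c).toNat : ℤ) + c + 1

/-- A bijective filling of `D(λ)` with `1, …, |λ|` (normalized to be `0` off the diagram). -/
def IsFilling (d : ℕ) (lam : ℕ → ℕ) (B : ℤ × ℤ → ℕ) : Prop :=
  Set.BijOn B (Diagram d lam) (Set.Icc 1 (sizeP d lam)) ∧
    ∀ p : ℤ × ℤ, p ∉ Diagram d lam → B p = 0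

/-- A balanced shifted tableau: a bijective filling such that at each box `(i,c)`,
`B(i,c)` is the `rk(i,c)`-th largest entry of the multiset of values of `B̃` on the
extended hook, i.e. exactly `rk(i,c) - 1` boxes of the extended hook carry a value
strictly larger than `B(i,c)`. -/
def IsBalanced (d : ℕ) (lam : ℕ → ℕ) (B : ℤ × ℤ → ℕ) : Prop :=
  IsFilling d lam B ∧ ∀ p ∈ Diagram d lam,
    ({q ∈ ExtHook d lam p.1 p.2 | B p < ExtFilling d B q}.ncard : ℤ) =
      rk d lam p.1 p.2 - 1

/-- A standard Young tableau of shifted shape `λ`. -/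
def IsSYT (d : ℕ) (lam : ℕ → ℕ) (B : ℤ × ℤ → ℕ) : Prop :=
  IsFilling d lam B ∧ ∀ p ∈ Diagram d lam, ∀ q ∈ Diagram d lam,
    ((p.1 = q.1 ∧ p.2 < q.2) → B p < B q) ∧ ((p.2 = q.2 ∧ p.1 < q.1) → B p < B q)

/-- The simple reflections of `W(B_n)`, acting on `ℤ`: `s 0` swaps `1 ↔ -1`,
and `s a` (for `a ≥ 1`) swaps `a ↔ a+1` and `-a ↔ -(a+1)`. -/
def sB (a : ℕ) : Equiv.Perm ℤ :=
  if a = 0 then Equiv.swap 1 (-1)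
  else Equiv.swap (a : ℤ) ((a : ℤ) + 1) * Equiv.swap (-(a : ℤ)) (-(a : ℤ) - 1)

/-- The product `s_{a_1} s_{a_2} ⋯ s_{a_m}` of a word. -/
def wordProd (L : List ℕ) : Equiv.Perm ℤ := (L.map sB).prod

/-- A signed permutation in `W(B_n)`: odd, and the identity beyond `n`. -/
def IsSignedPerm (n : ℕ) (w : Equiv.Perm ℤ) : Prop :=
  (∀ i : ℤ, w (-i) = -(w i)) ∧ ∀ i : ℤ, (n : ℤ) < |i| → w i = i

/-- The Coxeter length of `w` in `W(B_n)`. -/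
noncomputable def lengthB (n : ℕ) (w : Equiv.Perm ℤ) : ℕ :=
  sInf {m : ℕ | ∃ L : List ℕ, (∀ a ∈ L, a < n) ∧ wordProd L = w ∧ L.length = m}

/-- `L` is a reduced word of `w` in `W(B_n)`. -/
def IsReducedWord (n : ℕ) (w : Equiv.Perm ℤ) (L : List ℕ) : Prop :=
  (∀ a ∈ L, a < n) ∧ wordProd L = w ∧ L.length = lengthB n w

/-- The vector `e_k` (for `k ≥ 1` the `k`-th standard basis vector, with the
conventions `e 0 = 0` and `e (-k) = - e k`), represented as an odd function `ℤ → ℤ`. -/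
def eVec (k : ℤ) : ℤ → ℤ :=
  fun t => if t = 0 then 0 else if t = k then 1 else if t = -k then -1 else 0

/-- The positive roots of type `B_n`. -/
def PosRoots (n : ℕ) : Set (ℤ → ℤ) :=
  {v | (∃ i j : ℤ, 1 ≤ i ∧ i < j ∧ j ≤ (n : ℤ) ∧
        (v = eVec j - eVec i ∨ v = eVec j + eVec i)) ∨
       (∃ i : ℤ, 1 ≤ i ∧ i ≤ (n : ℤ) ∧ v = eVec i)}

/-- The action of a signed permutation on vectors: `w · e_i = e_{w(i)}`. -/
def actB (w : Equiv.Perm ℤ) (v : ℤ → ℤ) : ℤ → ℤ := fun t => v (w⁻¹ t)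

/-- The inversion set `Inv(w) = {α ∈ Φ⁺ : w⁻¹ · α ∈ -Φ⁺}`. -/
def InvSet (n : ℕ) (w : Equiv.Perm ℤ) : Set (ℤ → ℤ) :=
  {α | α ∈ PosRoots n ∧ -(actB w⁻¹ α) ∈ PosRoots n}

/-- The simple roots: `α_0 = e_1` and `α_a = e_{a+1} - e_a` for `a ≥ 1`. -/
def alphaRoot (a : ℕ) : ℤ → ℤ :=
  if a = 0 then eVec 1 else eVec ((a : ℤ) + 1) - eVec (a : ℤ)

/-- The reflection order of a word: `reflOrder L t = γ_{t+1} = s_{a_1} ⋯ s_{a_t} · α_{a_{t+1}}`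
(0-indexed). -/
def reflOrder (L : List ℕ) (t : ℕ) : ℤ → ℤ :=
  actB (wordProd (L.take t)) (alphaRoot (L.getD t 0))

/-- The trapezoid `Z(d,r) = (r+2d-1, r+2d-3, …, r+1)`. -/
def Zlam (d r : ℕ) : ℕ → ℕ := fun i => r + 2 * d + 1 - 2 * i

/-- The labeling `f : D(Z(d,r)) → Φ⁺`. -/
def fLabel (d r : ℕ) (p : ℤ × ℤ) : ℤ → ℤ :=
  if p.2 ≤ 0 then eVec ((d : ℤ) + 1 - p.1) - eVec p.2
  else if p.2 ≤ (r : ℤ) then eVec ((d : ℤ) + 1 - p.1) + eVec (p.2 + (d : ℤ))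
  else eVec ((d : ℤ) + 1 - p.1) - eVec (p.2 - (r : ℤ))

/-- The extended labeling `f̃`, with `f̃(i, i - d - 1) = 2 e_{d+1-i}`. -/
def fExtLabel (d r : ℕ) (p : ℤ × ℤ) : ℤ → ℤ :=
  if p.2 = p.1 - ((d : ℤ) + 1) then (2 : ℤ) • eVec ((d : ℤ) + 1 - p.1)
  else fLabel d r p

/-- `w` is the signed permutation `w^{(d,r)} ∈ W(B_{d+r})`, i.e.
`w(i) = d + i` for `1 ≤ i ≤ r` and `w(i) = -(i - r)` for `r < i ≤ d + r`. -/
def IsWdr (d r : ℕ) (w : Equiv.Perm ℤ) : Prop :=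
  IsSignedPerm (d + r) w ∧
    (∀ i : ℤ, 1 ≤ i → i ≤ (r : ℤ) → w i = (d : ℤ) + i) ∧
    (∀ i : ℤ, (r : ℤ) < i → i ≤ (d : ℤ) + (r : ℤ) → w i = -(i - r))


/-- `x` lies strictly between `y` and `z` (i.e. `min(y,z) < x < max(y,z)`). -/
def Between (x y z : ℕ) : Prop := (y < x ∧ x < z) ∨ (z < x ∧ x < y)

/-- A nonempty list is unimodal: strictly decreasing down to its minimum
(at 0-indexed position `k`), then strictly increasing. -/
def Unimodal (L : List ℕ) : Prop :=
  ∃ k : ℕ, k < L.length ∧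
    (∀ a b : ℕ, a < b → b ≤ k → L.getD b 0 < L.getD a 0) ∧
    (∀ a b : ℕ, k ≤ a → a < b → b < L.length → L.getD a 0 < L.getD b 0)

/-- Row `i` of the distinguished tableau of shape `Z(d,r)`:
`(r+d-i, …, r+1, 0, 1, …, r+d-i)`. -/
def rowWord (d r i : ℕ) : List ℕ :=
  (List.range (r + 2 * (d - i) + 1)).map fun t =>
    if t < d - i then r + (d - i) - t else t - (d - i)

/-- The reading word `π(T) = T_d T_{d-1} ⋯ T_1` of the distinguished tableau of
shape `Z(d,r)`. -/
def piWord (d r : ℕ) : List ℕ :=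
  (List.range d).flatMap fun k => rowWord d r (d - k)

/-- `μ_i = Z(d,r)_i - λ_i`. -/
def muF (d r : ℕ) (lam : ℕ → ℕ) (i : ℕ) : ℕ := r + 2 * d + 1 - 2 * i - lam i

/-- `σ_i = μ_1 + ⋯ + μ_i`. -/
def sigmaF (d r : ℕ) (lam : ℕ → ℕ) (i : ℕ) : ℕ := ∑ t ∈ Finset.Icc 1 i, muF d r lam t

/-- `ν_i = min{μ_i, …, μ_d}`. -/
noncomputable def nuF (d r : ℕ) (lam : ℕ → ℕ) (i : ℕ) : ℕ :=
  sInf {m : ℕ | ∃ j : ℕ, i ≤ j ∧ j ≤ d ∧ m = muF d r lam j}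

/-- The word `a^λ`: the concatenation over `i = 1, …, d` of the increasing runs
`(d+r-i-μ_i+1, …, d+r-i)`. -/
def aLamWord (d r : ℕ) (lam : ℕ → ℕ) : List ℕ :=
  (List.range d).flatMap fun k =>
    (List.range (muF d r lam (k + 1))).map fun t =>
      d + r - (k + 1) - muF d r lam (k + 1) + 1 + t

/-- Row `i` of the tableau `P(w^λ)`: entries `P(i,c) = c` for `c ≥ 0` and
`P(i,c) = r - c - ν_{d+1+c}` for `c < 0`. -/
noncomputable def rowWordP (d r : ℕ) (lam : ℕ → ℕ) (i : ℕ) : List ℕ :=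
  (List.range (lam i)).map fun t =>
    if t < d - i then r + (d - i) - t - nuF d r lam (i + 1 + t) else t - (d - i)

/-- The reading word `π(P(w^λ))`. -/
noncomputable def piWordP (d r : ℕ) (lam : ℕ → ℕ) : List ℕ :=
  (List.range d).flatMap fun k => rowWordP d r lam (d - k)

/-- The shape obtained from `λ` by adding one box at the end of row `i`. -/
def stepShape (lam : ℕ → ℕ) (i : ℕ) : ℕ → ℕ :=
  fun t => if t = i then lam i + 1 else lam t

/-- The box-adding map `f_i` on fillings: swap columns `j = λ_i + i - d` and `j + 1`
(in rows `1, …, i-1`), and put the value `N + 1` in the new box `(i, j)`. -/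
def addBox (d : ℕ) (lam : ℕ → ℕ) (i : ℕ) (N : ℕ) (B : ℤ × ℤ → ℕ) : ℤ × ℤ → ℕ :=
  fun p =>
    if p = ((i : ℤ), (lam i : ℤ) + (i : ℤ) - (d : ℤ)) then N + 1
    else if 1 ≤ p.1 ∧ p.1 < (i : ℤ) ∧ p.2 = (lam i : ℤ) + (i : ℤ) - (d : ℤ) then
      B (p.1, p.2 + 1)
    else if 1 ≤ p.1 ∧ p.1 < (i : ℤ) ∧ p.2 = (lam i : ℤ) + (i : ℤ) - (d : ℤ) + 1 then
      B (p.1, p.2 - 1)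
    else B p

/-- Successively apply the box-adding maps along a list of row indices,
tracking the current shape. -/
def FmapAux (d : ℕ) : List ℕ → (ℕ → ℕ) → (ℤ × ℤ → ℕ) → (ℤ × ℤ → ℕ)
  | [], _, B => B
  | i :: rest, lam, B => FmapAux d rest (stepShape lam i) (addBox d lam i (sizeP d lam) B)

/-- The shape after successively adding boxes along a list of row indices. -/
def shapeAux : List ℕ → (ℕ → ℕ) → (ℕ → ℕ)
  | [], lam => lam
  | i :: rest, lam => shapeAux rest (stepShape lam i)

/-- The list of row indices `1^{μ_1} 2^{μ_2} ⋯ d^{μ_d}` used to pad `λ` to `Z(d,r)`. -/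
def rowsList (d r : ℕ) (lam : ℕ → ℕ) : List ℕ :=
  (List.range d).flatMap fun k => List.replicate (muF d r lam (k + 1)) (k + 1)

/-- `BS(Z(d,r))|_λ`: balanced tableaux of shape `Z(d,r)` such that for each
`i ∈ {1,…,d}` the entries `N + σ_{i-1} + 1, …, N + σ_i` all occur in row `i`. -/
def BSRestricted (d r : ℕ) (lam : ℕ → ℕ) : Set (ℤ × ℤ → ℕ) :=
  {T | IsBalanced d (Zlam d r) T ∧ ∀ i : ℕ, 1 ≤ i → i ≤ d →
    ∀ k : ℕ, sizeP d lam + sigmaF d r lam (i - 1) + 1 ≤ k →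
      k ≤ sizeP d lam + sigmaF d r lam i →
      ∃ c : ℤ, ((i : ℤ), c) ∈ Diagram d (Zlam d r) ∧ T ((i : ℤ), c) = k}

/-- `w ∈ W(B_n)` pattern embeds the signed pattern `v` (given as its one-line
notation, a list of nonzero integers). -/
def PatternEmbeds (n : ℕ) (w : Equiv.Perm ℤ) (v : List ℤ) : Prop :=
  ∃ idx : Fin v.length → ℤ, StrictMono idx ∧
    (∀ j, 1 ≤ idx j ∧ idx j ≤ (n : ℤ)) ∧
    (∀ j, 0 < w (idx j) ↔ 0 < v.get j) ∧
    (∀ j k, |w (idx j)| < |w (idx k)| ↔ |v.get j| < |v.get k|)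

/-!
Write `c(w)` for the number of reduced words of `w` and `t_{rs}` for the reflection exchanging `r`
with `s` and `-r` with `-s`. For fixed `r`, Billey's transition equation says that the numbers
`c(w * t_{rs})`, summed with the sign of `s - r` over all `s` for which `w * t_{rs}` covers `w` in
Bruhat order, add up to zero. It is proved by induction on the length, by deleting the first letter
`k` of a reduced word: the terms not covered by the induction hypothesis are `± c(w)`, the sign
being that of the change of `w r` under `s_k`. Exactly two simple reflections move `w r`, one up
and one down, so these terms cancel.

The entries of `w^λ` encode `λ`: the positive ones are left-to-right maxima, and each negative one
determines a part. Let `(r, s)` be the last descent of an element with such a code, and apply the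
equation to `v = w * t_{rs}`. Exactly two terms survive, with opposite signs, so
`c(w) = c(v * t_{r,-p})` for a single position `p`; the new element has the same code. Iterating
removes all descents at positive positions and ends at the Grassmannian element of shape `λ`. The
first letters of its reduced words correspond to the removable corners of `D(λ)`, so `c` satisfies
there the recursion that counts standard tableaux by the position of their largest entry.
-/

/-! ### Signed permutations and reflections -/

namespace IsSignedPerm

variable {n N : ℕ} {u w : Equiv.Perm ℤ} {i : ℤ}

theorem one : IsSignedPerm n 1 := ⟨fun _ => rfl, fun _ _ => rfl⟩

theorem mul (hu : IsSignedPerm n u) (hw : IsSignedPerm n w) : IsSignedPerm n (u * w) :=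
  ⟨fun i => by simp only [Equiv.Perm.mul_apply, hw.1, hu.1],
    fun i hi => by rw [Equiv.Perm.mul_apply, hw.2 i hi, hu.2 i hi]⟩

theorem inv (hw : IsSignedPerm n w) : IsSignedPerm n w⁻¹ :=
  ⟨fun i => w.injective (by simp [hw.1]),
    fun i hi => by rw [Equiv.Perm.inv_eq_iff_eq, hw.2 i hi]⟩

theorem mono (hw : IsSignedPerm n w) (hN : n ≤ N) : IsSignedPerm N w :=
  ⟨hw.1, fun i hi => hw.2 i (by omega)⟩

theorem map_zero (hw : IsSignedPerm n w) : w 0 = 0 := by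
  have := hw.1 0
  rw [neg_zero] at this
  omega

theorem map_eq_zero_iff (hw : IsSignedPerm n w) : w i = 0 ↔ i = 0 := by
  rw [← hw.map_zero, w.injective.eq_iff, hw.map_zero]

theorem abs_apply_le (hw : IsSignedPerm n w) (hi : |i| ≤ n) : |w i| ≤ n := by
  by_contra hc
  have hfix := hw.2 (w i) (by omega)
  rw [w.injective hfix] at hc
  exact hc hi

end IsSignedPerm

/-- The reflection of `W(B_∞)` that interchanges `r ↔ s` and `-r ↔ -s`, for nonzero `r` and `s`. -/
def signedSwap (r s : ℤ) : Equiv.Perm ℤ :=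
  if s = -r then Equiv.swap r s else Equiv.swap r s * Equiv.swap (-r) (-s)

/-- The simple reflection `sB k` is `signedSwap (lowerValue k) (k + 1)`. -/
def lowerValue (k : ℕ) : ℤ := if k = 0 then -1 else k

section Reflections

variable {r s v : ℤ} {n k : ℕ} {w : Equiv.Perm ℤ}

theorem signedSwap_apply (hr : r ≠ 0) (hs : s ≠ 0) (x : ℤ) :
    signedSwap r s x =
      if x = r then s else if x = s then r else if x = -r then -s else if x = -s then -r
      else x := by
  unfold signedSwap
  split_ifs <;> simp only [Equiv.Perm.mul_apply, Equiv.swap_apply_def] <;> grind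

theorem signedSwap_apply_left (hr : r ≠ 0) (hs : s ≠ 0) : signedSwap r s r = s := by
  rw [signedSwap_apply hr hs, if_pos rfl]

theorem signedSwap_apply_right (hr : r ≠ 0) (hs : s ≠ 0) : signedSwap r s s = r := by
  rw [signedSwap_apply hr hs]
  split_ifs <;> omega

theorem signedSwap_apply_of_ne (hr : r ≠ 0) (hs : s ≠ 0) {x : ℤ} (h₁ : x ≠ r) (h₂ : x ≠ s)
    (h₃ : x ≠ -r) (h₄ : x ≠ -s) : signedSwap r s x = x := by
  rw [signedSwap_apply hr hs, if_neg h₁, if_neg h₂, if_neg h₃, if_neg h₄]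

theorem signedSwap_comm (hr : r ≠ 0) (hs : s ≠ 0) : signedSwap r s = signedSwap s r := by
  ext x
  rw [signedSwap_apply hr hs, signedSwap_apply hs hr]
  split_ifs <;> omega

theorem signedSwap_neg_neg (hr : r ≠ 0) (hs : s ≠ 0) :
    signedSwap (-r) (-s) = signedSwap r s := by
  ext x
  rw [signedSwap_apply hr hs, signedSwap_apply (neg_ne_zero.2 hr) (neg_ne_zero.2 hs)]
  split_ifs <;> omega

theorem mul_signedSwap_apply_left (hr : r ≠ 0) (hs : s ≠ 0) (w : Equiv.Perm ℤ) :
    (w * signedSwap r s) r = w s := by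
  rw [Equiv.Perm.mul_apply, signedSwap_apply_left hr hs]

theorem mul_signedSwap_apply_right (hr : r ≠ 0) (hs : s ≠ 0) (w : Equiv.Perm ℤ) :
    (w * signedSwap r s) s = w r := by
  rw [Equiv.Perm.mul_apply, signedSwap_apply_right hr hs]

theorem mul_signedSwap_apply_of_ne (hr : r ≠ 0) (hs : s ≠ 0) (w : Equiv.Perm ℤ) {x : ℤ}
    (h₁ : x ≠ r) (h₂ : x ≠ s) (h₃ : x ≠ -r) (h₄ : x ≠ -s) : (w * signedSwap r s) x = w x := by
  rw [Equiv.Perm.mul_apply, signedSwap_apply_of_ne hr hs h₁ h₂ h₃ h₄]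

theorem signedSwap_self (hr : r ≠ 0) : signedSwap r r = 1 := by
  ext x
  rw [signedSwap_apply hr hr, Equiv.Perm.one_apply]
  split_ifs <;> omega

theorem signedSwap_mul_self (hr : r ≠ 0) (hs : s ≠ 0) : signedSwap r s * signedSwap r s = 1 := by
  ext x
  rw [Equiv.Perm.mul_apply, Equiv.Perm.one_apply, signedSwap_apply hr hs, signedSwap_apply hr hs]
  split_ifs <;> omega

theorem mul_signedSwap_mul_signedSwap (hr : r ≠ 0) (hs : s ≠ 0) (w : Equiv.Perm ℤ) :
    w * signedSwap r s * signedSwap r s = w := by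
  rw [mul_assoc, signedSwap_mul_self hr hs, mul_one]

theorem signedSwap_inv (hr : r ≠ 0) (hs : s ≠ 0) : (signedSwap r s)⁻¹ = signedSwap r s :=
  inv_eq_of_mul_eq_one_left (signedSwap_mul_self hr hs)

theorem isSignedPerm_signedSwap (hr : r ≠ 0) (hs : s ≠ 0) (hrn : |r| ≤ n) (hsn : |s| ≤ n) :
    IsSignedPerm n (signedSwap r s) := by
  rw [abs_le] at hrn hsn
  constructor
  · intro x
    rw [signedSwap_apply hr hs, signedSwap_apply hr hs]
    split_ifs <;> omega
  · intro x hx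
    rw [lt_abs] at hx
    exact signedSwap_apply_of_ne hr hs (by omega) (by omega) (by omega) (by omega)

theorem IsSignedPerm.mul_signedSwap (hw : IsSignedPerm n w) (hr : r ≠ 0) (hs : s ≠ 0)
    (hrn : |r| ≤ n) (hsn : |s| ≤ n) : IsSignedPerm n (w * signedSwap r s) :=
  hw.mul (isSignedPerm_signedSwap hr hs hrn hsn)

theorem IsSignedPerm.mul_signedSwap_eq (hw : IsSignedPerm n w) (hr : r ≠ 0) (hs : s ≠ 0) :
    w * signedSwap r s = signedSwap (w r) (w s) * w := by
  ext x
  have hr' := mt hw.map_eq_zero_iff.1 hr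
  have hs' := mt hw.map_eq_zero_iff.1 hs
  simp only [Equiv.Perm.mul_apply, signedSwap_apply hr hs, signedSwap_apply hr' hs', ← hw.1,
    w.injective.eq_iff]
  split_ifs <;> rfl

theorem lowerValue_cases (k : ℕ) : k = 0 ∧ lowerValue k = -1 ∨ k ≠ 0 ∧ lowerValue k = k := by
  unfold lowerValue
  split_ifs <;> omega

theorem lowerValue_ne_zero (k : ℕ) : lowerValue k ≠ 0 := by
  unfold lowerValue
  split_ifs <;> omega

theorem lowerValue_lt (k : ℕ) : lowerValue k < k + 1 := by
  unfold lowerValue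
  split_ifs <;> omega

theorem sB_eq_signedSwap (k : ℕ) : sB k = signedSwap (lowerValue k) (k + 1) := by
  unfold sB signedSwap lowerValue
  split_ifs with hk
  · subst hk
    exact Equiv.swap_comm 1 (-1)
  · omega
  · omega
  · rw [neg_add']

theorem sB_apply (k : ℕ) (x : ℤ) :
    sB k x =
      if x = lowerValue k then (k : ℤ) + 1 else if x = k + 1 then lowerValue k
      else if x = -lowerValue k then -((k : ℤ) + 1) else if x = -((k : ℤ) + 1) then -lowerValue k
      else x := by
  rw [sB_eq_signedSwap, signedSwap_apply (lowerValue_ne_zero k) (by omega)]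

theorem sB_mul_self (k : ℕ) : sB k * sB k = 1 := by
  rw [sB_eq_signedSwap, signedSwap_mul_self (lowerValue_ne_zero k) (by omega)]

theorem sB_mul_sB_mul (k : ℕ) (w : Equiv.Perm ℤ) : sB k * (sB k * w) = w := by
  rw [← mul_assoc, sB_mul_self, one_mul]

theorem sB_inv (k : ℕ) : (sB k)⁻¹ = sB k := inv_eq_of_mul_eq_one_left (sB_mul_self k)

theorem sB_sB (k : ℕ) (x : ℤ) : sB k (sB k x) = x := by
  rw [← Equiv.Perm.mul_apply, sB_mul_self, Equiv.Perm.one_apply]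

theorem isSignedPerm_sB (hk : k < n) : IsSignedPerm n (sB k) := by
  rw [sB_eq_signedSwap]
  apply isSignedPerm_signedSwap (lowerValue_ne_zero k) (by omega)
  · unfold lowerValue
    split_ifs <;> rw [abs_le] <;> omega
  · rw [abs_le]
    omega

theorem IsSignedPerm.sB_mul (hw : IsSignedPerm n w) (hk : k < n) : IsSignedPerm n (sB k * w) :=
  (isSignedPerm_sB hk).mul hw

theorem sB_neg (k : ℕ) (x : ℤ) : sB k (-x) = -sB k x :=
  (isSignedPerm_sB k.lt_succ_self).1 x

theorem sB_ne_zero {x : ℤ} (hx : x ≠ 0) (k : ℕ) : sB k x ≠ 0 :=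
  mt (isSignedPerm_sB k.lt_succ_self).map_eq_zero_iff.1 hx

theorem sB_eq_signedSwap_of_ne (h : sB k v ≠ v) : sB k = signedSwap v (sB k v) := by
  have hlow := lowerValue_ne_zero k
  have hup : (k : ℤ) + 1 ≠ 0 := by omega
  have hv : v = lowerValue k ∨ v = k + 1 ∨ v = -lowerValue k ∨ v = -((k : ℤ) + 1) := by
    by_contra! hc
    rw [sB_apply, if_neg hc.1, if_neg hc.2.1, if_neg hc.2.2.1, if_neg hc.2.2.2] at h
    exact h rfl
  have hswap := sB_eq_signedSwap k
  have hlow_map : sB k (lowerValue k) = k + 1 := by rw [hswap, signedSwap_apply_left hlow hup]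
  have hup_map : sB k (k + 1) = lowerValue k := by rw [hswap, signedSwap_apply_right hlow hup]
  rcases hv with rfl | rfl | rfl | rfl
  · rw [hlow_map, hswap]
  · rw [hup_map, hswap, signedSwap_comm hlow hup]
  · rw [sB_neg, hlow_map, signedSwap_neg_neg hlow hup, hswap]
  · rw [sB_neg, hup_map, signedSwap_neg_neg hup hlow, signedSwap_comm hup hlow, hswap]

theorem sB_lt_sB {a b : ℤ} (ha : a ≠ 0) (hb : b ≠ 0) (hab : a < b) (hk : sB k a ≠ b) :
    sB k a < sB k b := by
  rw [sB_apply] at hk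
  rw [sB_apply, sB_apply]
  unfold lowerValue at *
  grind

theorem sB_lt_sB_iff_of_ne {a b : ℤ} (ha : a ≠ 0) (hb : b ≠ 0) (hk : sB k a ≠ b) :
    sB k a < sB k b ↔ a < b := by
  refine ⟨fun h => ?_, fun h => sB_lt_sB ha hb h hk⟩
  have := sB_lt_sB (sB_ne_zero ha k) (sB_ne_zero hb k) h (k := k)
    (by rw [sB_sB]; rintro rfl; exact hk (sB_sB k b))
  rwa [sB_sB, sB_sB] at this

theorem IsSignedPerm.mul_signedSwap_eq_sB_mul_iff (hw : IsSignedPerm n w) (hr : r ≠ 0) (hs : s ≠ 0)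
    (hrs : r ≠ s) : w * signedSwap r s = sB k * w ↔ w s = sB k (w r) := by
  constructor
  · intro h
    have := congrArg (fun u : Equiv.Perm ℤ => u r) h
    simpa only [Equiv.Perm.mul_apply, signedSwap_apply_left hr hs] using this
  · intro h
    have hne : sB k (w r) ≠ w r := by
      rw [← h]
      exact fun hc => hrs (w.injective hc).symm
    rw [hw.mul_signedSwap_eq hr hs, sB_eq_signedSwap_of_ne hne, h]

end Reflections

/-! ### Descents, inversions and reduced words -/

/-- `sB k` is a left descent of `w`: left multiplication by it decreases the length. -/
def IsLeftDescent (k : ℕ) (w : Equiv.Perm ℤ) : Prop := w⁻¹ (k + 1) < w⁻¹ (lowerValue k)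

instance (k : ℕ) (w : Equiv.Perm ℤ) : Decidable (IsLeftDescent k w) :=
  inferInstanceAs (Decidable (_ < _))

/-- The left descents of `w ∈ W(B_n)`. -/
def leftDescents (n : ℕ) (w : Equiv.Perm ℤ) : Finset ℕ :=
  (Finset.range n).filter fun k => IsLeftDescent k w

/-- The inversions of a signed permutation. Each orbit of `(i, j) ↦ (-j, -i)` is represented by
its member with `0 ≤ i + j`, which makes the definition independent of the rank. -/
def inversions (w : Equiv.Perm ℤ) : Set (ℤ × ℤ) :=
  {p | p.1 ≠ 0 ∧ p.2 ≠ 0 ∧ p.1 < p.2 ∧ 0 ≤ p.1 + p.2 ∧ w p.2 < w p.1}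

/-- The number of inversions, which is the Coxeter length. -/
noncomputable def invNum (w : Equiv.Perm ℤ) : ℕ := (inversions w).ncard

/-- The number of reduced words of a signed permutation. No bound on the letters is needed, since
all letters of a reduced word of `w ∈ W(B_n)` are less than `n`. -/
noncomputable def redCount (w : Equiv.Perm ℤ) : ℕ :=
  Nat.card {L : List ℕ // wordProd L = w ∧ L.length = invNum w}

section Length

variable {n k : ℕ} {v : ℤ} {w : Equiv.Perm ℤ}

theorem sB_mul_inv_apply (k : ℕ) (w : Equiv.Perm ℤ) (x : ℤ) :
    (sB k * w)⁻¹ x = w⁻¹ (sB k x) := by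
  rw [mul_inv_rev, sB_inv, Equiv.Perm.mul_apply]

theorem sB_lowerValue (k : ℕ) : sB k (lowerValue k) = k + 1 := by
  rw [sB_apply, if_pos rfl]

theorem sB_succ (k : ℕ) : sB k (k + 1) = lowerValue k := by
  rw [← sB_lowerValue, sB_sB]

theorem lt_sB_iff : v < sB k v ↔ v = lowerValue k ∨ v = -((k : ℤ) + 1) := by
  rw [sB_apply]
  unfold lowerValue
  grind

theorem isLeftDescent_sB_mul : IsLeftDescent k (sB k * w) ↔ ¬ IsLeftDescent k w := by
  have hne : w⁻¹ (lowerValue k) ≠ w⁻¹ (k + 1) :=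
    fun h => (lowerValue_lt k).ne (w⁻¹.injective h)
  unfold IsLeftDescent
  rw [sB_mul_inv_apply, sB_mul_inv_apply, sB_succ, sB_lowerValue]
  omega

theorem IsSignedPerm.isLeftDescent_iff_of_lt (hw : IsSignedPerm n w) (hv : v < sB k v) :
    IsLeftDescent k w ↔ w⁻¹ (sB k v) < w⁻¹ v := by
  rcases lt_sB_iff.1 hv with rfl | rfl
  · rw [sB_lowerValue, IsLeftDescent]
  · rw [sB_neg, sB_succ, hw.inv.1, hw.inv.1, neg_lt_neg_iff, IsLeftDescent]

theorem IsSignedPerm.lt_of_isLeftDescent (hw : IsSignedPerm n w) (hk : IsLeftDescent k w) :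
    k < n := by
  by_contra! hn
  have hup : w⁻¹ (k + 1) = k + 1 := hw.inv.2 _ (by rw [lt_abs]; omega)
  have hlow : w⁻¹ (lowerValue k) ≤ k := by
    rcases le_or_gt |lowerValue k| n with h | h
    · exact ((abs_le.1 (hw.inv.abs_apply_le h)).2).trans (by exact_mod_cast hn)
    · rw [hw.inv.2 _ h]
      have := lowerValue_lt k
      omega
  rw [IsLeftDescent, hup] at hk
  omega

theorem IsSignedPerm.mem_leftDescents (hw : IsSignedPerm n w) :
    k ∈ leftDescents n w ↔ IsLeftDescent k w := by
  rw [leftDescents, Finset.mem_filter, Finset.mem_range]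
  exact ⟨And.right, fun h => ⟨hw.lt_of_isLeftDescent h, h⟩⟩

theorem IsSignedPerm.exists_isLeftDescent (hw : IsSignedPerm n w) (h1 : w ≠ 1) :
    ∃ k, IsLeftDescent k w := by
  by_contra! hasc
  simp only [IsLeftDescent, not_lt] at hasc
  have hmono : Monotone fun x : ℕ => w⁻¹ x - x := by
    refine monotone_nat_of_le_succ fun k => ?_
    have hk := hasc k
    have hne : w⁻¹ (lowerValue k) ≠ w⁻¹ (k + 1) :=
      fun h => (lowerValue_lt k).ne (w⁻¹.injective h)
    rcases Nat.eq_zero_or_pos k with rfl | hpos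
    · have hneg := hw.inv.1 1
      have hzero := hw.inv.map_zero
      simp only [lowerValue, if_true, CharP.cast_eq_zero, zero_add] at hk hne
      push_cast
      omega
    · rw [lowerValue, if_neg (by omega)] at hk hne
      push_cast
      omega
  have hfix : ∀ x : ℕ, w⁻¹ x = x := fun x => by
    have hlow := hmono (Nat.zero_le x)
    have hhigh := hmono (Nat.le_add_left x (n + 1))
    have hlast : w⁻¹ ((n + 1 + x : ℕ) : ℤ) = (n + 1 + x : ℕ) :=
      hw.inv.2 _ (by rw [lt_abs]; omega)
    simp only [hlast, sub_self, CharP.cast_eq_zero, hw.inv.map_zero] at hlow hhigh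
    omega
  refine h1 (inv_eq_one.1 (Equiv.ext fun x => ?_))
  rcases Int.eq_nat_or_neg x with ⟨m, rfl | rfl⟩
  · exact hfix m
  · rw [hw.inv.1, hfix, Equiv.Perm.one_apply]

theorem IsSignedPerm.finite_inversions (hw : IsSignedPerm n w) : (inversions w).Finite := by
  refine ((Set.finite_Icc (-n : ℤ) n).prod (Set.finite_Icc (-n : ℤ) n)).subset ?_
  rintro ⟨i, j⟩ ⟨-, -, hij, hsum, hinv⟩
  dsimp only at hij hsum hinv
  have hj : j ≤ n := by
    by_contra! hj
    rw [hw.2 j (by rw [lt_abs]; omega)] at hinv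
    have hfix := w.injective (hw.2 (w i) (by rw [lt_abs]; omega))
    omega
  simp only [Set.mem_prod, Set.mem_Icc]
  omega

theorem mem_inversions {i j : ℤ} :
    (i, j) ∈ inversions w ↔ i ≠ 0 ∧ j ≠ 0 ∧ i < j ∧ 0 ≤ i + j ∧ w j < w i :=
  Iff.rfl

theorem invNum_one : invNum 1 = 0 := by
  refine (Set.ncard_eq_zero (IsSignedPerm.one (n := 0)).finite_inversions).2 ?_
  refine Set.eq_empty_of_forall_notMem fun ⟨i, j⟩ h => ?_
  exact lt_asymm h.2.2.1 h.2.2.2.2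

theorem sB_lt_sB_iff {x y : ℤ} (hx : x ≠ 0) (hy : y ≠ 0) :
    sB k y < sB k x ↔
      (y < x ∧ ¬(x = k + 1 ∧ y = lowerValue k) ∧ ¬(x = -lowerValue k ∧ y = -((k : ℤ) + 1))) ∨
        (x = lowerValue k ∧ y = k + 1) ∨ (x = -((k : ℤ) + 1) ∧ y = -lowerValue k) := by
  have hlow := lowerValue_cases k
  rw [sB_apply, sB_apply]
  split_ifs <;> omega

theorem IsSignedPerm.inversions_sB_mul (hw : IsSignedPerm n w) (hk : ¬ IsLeftDescent k w) :
    ∃ p ∉ inversions w, inversions (sB k * w) = insert p (inversions w) := by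
  obtain ⟨a, hwa⟩ := w.surjective (lowerValue k)
  obtain ⟨b, hwb⟩ := w.surjective (k + 1)
  have hlt := lowerValue_lt k
  have hab : a < b := by
    rw [IsLeftDescent, Equiv.Perm.inv_eq_iff_eq.2 hwa.symm, Equiv.Perm.inv_eq_iff_eq.2 hwb.symm,
      not_lt] at hk
    exact hk.lt_of_ne (by rintro rfl; omega)
  have ha : a ≠ 0 := mt hw.map_eq_zero_iff.2 (hwa ▸ lowerValue_ne_zero k)
  have hb : b ≠ 0 := mt hw.map_eq_zero_iff.2 (by omega)
  have hna : w (-a) = -lowerValue k := by rw [hw.1, hwa]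
  have hnb : w (-b) = -((k : ℤ) + 1) := by rw [hw.1, hwb]
  refine ⟨if 0 ≤ a + b then (a, b) else (-b, -a), ?_, ?_⟩
  · split_ifs <;> rw [mem_inversions] <;> omega
  ext ⟨i, j⟩
  rw [Set.mem_insert_iff, mem_inversions, mem_inversions]
  by_cases hi : i = 0
  · split_ifs <;> simp only [Prod.mk.injEq] <;> omega
  by_cases hj : j = 0
  · split_ifs <;> simp only [Prod.mk.injEq] <;> omega
  rw [Equiv.Perm.mul_apply, Equiv.Perm.mul_apply,
    sB_lt_sB_iff (mt hw.map_eq_zero_iff.1 hi) (mt hw.map_eq_zero_iff.1 hj),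
    ← hna, ← hnb, ← hwa, ← hwb]
  simp only [w.injective.eq_iff]
  split_ifs <;> simp only [Prod.mk.injEq] <;> omega

theorem IsSignedPerm.invNum_sB_mul_of_not (hw : IsSignedPerm n w) (hk : ¬ IsLeftDescent k w) :
    invNum (sB k * w) = invNum w + 1 := by
  obtain ⟨p, hp, hins⟩ := hw.inversions_sB_mul hk
  rw [invNum, hins, Set.ncard_insert_of_notMem hp hw.finite_inversions, invNum]

theorem IsSignedPerm.invNum_sB_mul_add_one (hw : IsSignedPerm n w) (hk : IsLeftDescent k w) :
    invNum (sB k * w) + 1 = invNum w := by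
  have hasc : ¬ IsLeftDescent k (sB k * w) := by rwa [isLeftDescent_sB_mul, not_not]
  have := (hw.sB_mul (hw.lt_of_isLeftDescent hk)).invNum_sB_mul_of_not hasc
  rw [sB_mul_sB_mul] at this
  exact this.symm

theorem IsSignedPerm.invNum_sB_mul_lt_iff (hw : IsSignedPerm n w) :
    invNum (sB k * w) < invNum w ↔ IsLeftDescent k w := by
  by_cases hk : IsLeftDescent k w
  · have := hw.invNum_sB_mul_add_one hk
    simp only [hk, iff_true]
    omega
  · have := hw.invNum_sB_mul_of_not hk
    simp only [hk, iff_false]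
    omega

theorem IsSignedPerm.invNum_le_add_one (hw : IsSignedPerm n w) (k : ℕ) :
    invNum w ≤ invNum (sB k * w) + 1 := by
  by_cases hk : IsLeftDescent k w
  · exact (hw.invNum_sB_mul_add_one hk).ge
  · have := hw.invNum_sB_mul_of_not hk
    omega

theorem IsSignedPerm.induction_on_descents {motive : ∀ w, IsSignedPerm n w → Prop}
    (one : motive 1 .one)
    (descent : ∀ w k (hw : IsSignedPerm n w) (hk : IsLeftDescent k w),
      motive (sB k * w) (hw.sB_mul (hw.lt_of_isLeftDescent hk)) → motive w hw)
    (w : Equiv.Perm ℤ) (hw : IsSignedPerm n w) : motive w hw := by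
  induction h : invNum w using Nat.strong_induction_on generalizing w with
  | _ m ih =>
    by_cases h1 : w = 1
    · subst h1
      exact one
    · obtain ⟨k, hk⟩ := hw.exists_isLeftDescent h1
      have := hw.invNum_sB_mul_add_one hk
      exact descent w k hw hk (ih _ (by omega) _ _ rfl)

theorem wordProd_cons (k : ℕ) (L : List ℕ) : wordProd (k :: L) = sB k * wordProd L := by
  rw [wordProd, List.map_cons, List.prod_cons, wordProd]

theorem wordProd_append (L M : List ℕ) : wordProd (L ++ M) = wordProd L * wordProd M := by
  rw [wordProd, List.map_append, List.prod_append, wordProd, wordProd]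

theorem isSignedPerm_wordProd {L : List ℕ} (hL : ∀ k ∈ L, k < n) :
    IsSignedPerm n (wordProd L) := by
  induction L with
  | nil => exact .one
  | cons k L ih =>
    rw [wordProd_cons]
    exact (ih fun a ha => hL a (List.mem_cons_of_mem k ha)).sB_mul (hL k List.mem_cons_self)

theorem exists_isSignedPerm_wordProd (L : List ℕ) : ∃ n, IsSignedPerm n (wordProd L) :=
  ⟨L.sum + 1, isSignedPerm_wordProd fun _ hk => Nat.lt_succ_of_le (List.le_sum_of_mem hk)⟩

theorem invNum_wordProd_le (L : List ℕ) : invNum (wordProd L) ≤ L.length := by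
  induction L with
  | nil => exact invNum_one.le
  | cons k L ih =>
    obtain ⟨n, hn⟩ := exists_isSignedPerm_wordProd (k :: L)
    have := hn.invNum_le_add_one k
    rw [wordProd_cons, sB_mul_sB_mul] at this
    rw [wordProd_cons, List.length_cons]
    omega

theorem IsSignedPerm.exists_wordProd_eq (hw : IsSignedPerm n w) :
    ∃ L : List ℕ, (∀ k ∈ L, k < n) ∧ wordProd L = w ∧ L.length = invNum w := by
  induction w, hw using IsSignedPerm.induction_on_descents with
  | one => exact ⟨[], by simp, rfl, invNum_one.symm⟩
  | descent w k hw hk ih =>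
    obtain ⟨L, hlt, hprod, hlen⟩ := ih
    refine ⟨k :: L, List.forall_mem_cons.2 ⟨hw.lt_of_isLeftDescent hk, hlt⟩, ?_, ?_⟩
    · rw [wordProd_cons, hprod, sB_mul_sB_mul]
    · rw [List.length_cons, hlen, hw.invNum_sB_mul_add_one hk]

theorem IsSignedPerm.lengthB_eq_invNum (hw : IsSignedPerm n w) : lengthB n w = invNum w := by
  refine IsLeast.csInf_eq ⟨hw.exists_wordProd_eq, ?_⟩
  rintro m ⟨L, -, rfl, rfl⟩
  exact invNum_wordProd_le L

theorem IsSignedPerm.wordProd_cons_reduced_iff (hw : IsSignedPerm n w) {L : List ℕ} :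
    (wordProd (k :: L) = w ∧ (k :: L).length = invNum w) ↔
      IsLeftDescent k w ∧ wordProd L = sB k * w ∧ L.length = invNum (sB k * w) := by
  rw [wordProd_cons, List.length_cons]
  constructor
  · rintro ⟨rfl, hlen⟩
    have hk : IsLeftDescent k (sB k * wordProd L) := by
      rw [← hw.invNum_sB_mul_lt_iff, ← hlen, sB_mul_sB_mul]
      exact Nat.lt_succ_of_le (invNum_wordProd_le L)
    have := hw.invNum_sB_mul_add_one hk
    exact ⟨hk, (sB_mul_sB_mul k _).symm, by omega⟩
  · rintro ⟨hk, hprod, hlen⟩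
    rw [hprod, sB_mul_sB_mul, hlen, hw.invNum_sB_mul_add_one hk]
    exact ⟨rfl, rfl⟩

theorem IsSignedPerm.isReducedWord_iff (hw : IsSignedPerm n w) {L : List ℕ} :
    IsReducedWord n w L ↔ wordProd L = w ∧ L.length = invNum w := by
  rw [IsReducedWord, hw.lengthB_eq_invNum, and_iff_right_iff_imp]
  intro h
  induction L generalizing w with
  | nil => simp
  | cons k L ih =>
    obtain ⟨hk, hL⟩ := hw.wordProd_cons_reduced_iff.1 h
    have hkn := hw.lt_of_isLeftDescent hk
    exact List.forall_mem_cons.2 ⟨hkn, ih (hw.sB_mul hkn) hL⟩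

theorem IsSignedPerm.card_isReducedWord (hw : IsSignedPerm n w) :
    Nat.card {L : List ℕ // IsReducedWord n w L} = redCount w := by
  simp only [hw.isReducedWord_iff, redCount]

theorem redCount_one : redCount 1 = 1 := by
  rw [redCount, Nat.card_eq_one_iff_exists]
  refine ⟨⟨[], rfl, invNum_one.symm⟩, ?_⟩
  rintro ⟨L, -, hL⟩
  refine Subtype.ext ?_
  exact List.length_eq_zero_iff.1 (hL.trans invNum_one)

/-- Reduced words of `w ≠ 1` are classified by their first letter, which is a left descent. -/
def reducedWordsEquivSigma (hw : IsSignedPerm n w) (h1 : w ≠ 1) :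
    {L : List ℕ // wordProd L = w ∧ L.length = invNum w} ≃
      Σ k : leftDescents n w,
        {L : List ℕ // wordProd L = sB k * w ∧ L.length = invNum (sB k * w)} where
  toFun
    | ⟨[], h⟩ => (h1 h.1.symm).elim
    | ⟨k :: L, h⟩ =>
      ⟨⟨k, hw.mem_leftDescents.2 (hw.wordProd_cons_reduced_iff.1 h).1⟩, L,
        (hw.wordProd_cons_reduced_iff.1 h).2⟩
  invFun p := ⟨p.1 :: p.2.1, hw.wordProd_cons_reduced_iff.2
    ⟨hw.mem_leftDescents.1 p.1.2, p.2.2⟩⟩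
  left_inv
    | ⟨[], h⟩ => (h1 h.1.symm).elim
    | ⟨_ :: _, _⟩ => rfl
  right_inv _ := rfl

theorem IsSignedPerm.finite_reducedWords (hw : IsSignedPerm n w) :
    Finite {L : List ℕ // wordProd L = w ∧ L.length = invNum w} := by
  refine Set.Finite.subset (List.finite_length_eq (Fin n) (invNum w) |>.image
    (List.map Fin.val)) fun L hL => ?_
  have hlt := (hw.isReducedWord_iff.2 hL).1
  exact ⟨L.pmap Fin.mk hlt, by simpa using hL.2, by simp [List.map_pmap]⟩

theorem IsSignedPerm.redCount_eq_sum (hw : IsSignedPerm n w) (h1 : w ≠ 1) :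
    redCount w = ∑ k ∈ leftDescents n w, redCount (sB k * w) := by
  have hfin (k : leftDescents n w) :
      Finite {L : List ℕ // wordProd L = sB k * w ∧ L.length = invNum (sB k * w)} :=
    (hw.sB_mul (hw.lt_of_isLeftDescent (hw.mem_leftDescents.1 k.2))).finite_reducedWords
  rw [redCount, Nat.card_congr (reducedWordsEquivSigma hw h1), Nat.card_sigma,
    ← Finset.sum_coe_sort (leftDescents n w)]
  rfl

end Length

/-! ### Bruhat covers and the transition equation -/

/-- `w * signedSwap r s` covers `w` in the Bruhat order. -/
def IsBruhatCover (w : Equiv.Perm ℤ) (r s : ℤ) : Prop :=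
  invNum (w * signedSwap r s) = invNum w + 1

noncomputable instance (w : Equiv.Perm ℤ) (r s : ℤ) : Decidable (IsBruhatCover w r s) :=
  inferInstanceAs (Decidable (_ = _))

/-- The positions `s` such that `w * signedSwap r s` is a Bruhat cover of `w ∈ W(B_n)`
in `W(B_{n+1})`. -/
noncomputable def bruhatCovers (n : ℕ) (w : Equiv.Perm ℤ) (r : ℤ) : Finset ℤ :=
  (Finset.Icc (-(n + 1 : ℤ)) (n + 1)).filter fun s => s ≠ 0 ∧ IsBruhatCover w r s

section Bruhat

variable {n k : ℕ} {r s : ℤ} {w : Equiv.Perm ℤ}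

theorem isBruhatCover_comm (hr : r ≠ 0) (hs : s ≠ 0) :
    IsBruhatCover w r s ↔ IsBruhatCover w s r := by
  rw [IsBruhatCover, signedSwap_comm hr hs, IsBruhatCover]

theorem IsSignedPerm.exists_mul_signedSwap (hw : IsSignedPerm n w) (hr : r ≠ 0) (hs : s ≠ 0) :
    ∃ N, IsSignedPerm N w ∧ IsSignedPerm N (w * signedSwap r s) := by
  have hN := hw.mono (N := n + r.natAbs + s.natAbs) (by omega)
  exact ⟨_, hN, hN.mul_signedSwap hr hs (by rw [Int.abs_eq_natAbs]; omega)
    (by rw [Int.abs_eq_natAbs]; omega)⟩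

theorem IsSignedPerm.sB_mul_add (hw : IsSignedPerm n w) (k : ℕ) :
    IsSignedPerm (n + k + 1) (sB k * w) :=
  (hw.mono (by omega)).sB_mul (by omega)

theorem IsSignedPerm.invNum_mul_signedSwap_lt (hw : IsSignedPerm n w) (hr : r ≠ 0) (hs : s ≠ 0)
    (hrs : r < s) (hlt : w s < w r) : invNum (w * signedSwap r s) < invNum w := by
  induction w, hw using IsSignedPerm.induction_on_descents with
  | one => exact absurd hlt hrs.not_gt
  | descent w k hw hk ih =>
    have hlen := hw.invNum_sB_mul_add_one hk
    by_cases heq : w s = sB k (w r)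
    · rw [(hw.mul_signedSwap_eq_sB_mul_iff hr hs hrs.ne).2 heq]
      omega
    · have hlt' : (sB k * w) s < (sB k * w) r :=
        sB_lt_sB (mt hw.map_eq_zero_iff.1 hs) (mt hw.map_eq_zero_iff.1 hr) hlt
          fun h => heq (by rw [← h, sB_sB])
      obtain ⟨N, -, hN⟩ := hw.exists_mul_signedSwap hr hs
      have hstep := hN.invNum_le_add_one k
      have := ih hlt'
      rw [mul_assoc] at this
      omega

theorem IsSignedPerm.invNum_lt_mul_signedSwap_iff (hw : IsSignedPerm n w) (hr : r ≠ 0)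
    (hs : s ≠ 0) (hrs : r < s) : invNum w < invNum (w * signedSwap r s) ↔ w r < w s := by
  constructor
  · intro h
    by_contra! hle
    exact h.not_gt (hw.invNum_mul_signedSwap_lt hr hs hrs
      (hle.lt_of_ne fun h => hrs.ne (w.injective h).symm))
  · intro h
    obtain ⟨N, -, hN⟩ := hw.exists_mul_signedSwap hr hs
    have := hN.invNum_mul_signedSwap_lt hr hs hrs
      (by rwa [Equiv.Perm.mul_apply, Equiv.Perm.mul_apply, signedSwap_apply_left hr hs,
        signedSwap_apply_right hr hs])
    rwa [mul_signedSwap_mul_signedSwap hr hs] at this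

theorem IsSignedPerm.lt_of_isBruhatCover (hw : IsSignedPerm n w) (hr : r ≠ 0) (hs : s ≠ 0)
    (hrs : r < s) (h : IsBruhatCover w r s) : w r < w s :=
  (hw.invNum_lt_mul_signedSwap_iff hr hs hrs).1 (by rw [h]; exact Nat.lt_succ_self _)

theorem IsSignedPerm.invNum_sB_mul_lt_mul_signedSwap_iff (hw : IsSignedPerm n w) (hr : r ≠ 0)
    (hs : s ≠ 0) (hne : w s ≠ sB k (w r)) :
    invNum (sB k * w) < invNum (sB k * w * signedSwap r s) ↔
      invNum w < invNum (w * signedSwap r s) := by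
  wlog hrs : r < s generalizing r s
  · rcases (not_lt.1 hrs).eq_or_lt with rfl | hsr
    · simp only [signedSwap_self hs, mul_one, lt_irrefl]
    · rw [signedSwap_comm hr hs]
      exact this hs hr (fun h => hne (by rw [h, sB_sB])) hsr
  rw [(hw.sB_mul_add k).invNum_lt_mul_signedSwap_iff hr hs hrs,
    hw.invNum_lt_mul_signedSwap_iff hr hs hrs]
  exact sB_lt_sB_iff_of_ne (mt hw.map_eq_zero_iff.1 hr) (mt hw.map_eq_zero_iff.1 hs) hne.symm

theorem IsSignedPerm.isBruhatCover_sB_mul_iff (hw : IsSignedPerm n w) (hr : r ≠ 0)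
    (hs : s ≠ 0) (hne : w s ≠ sB k (w r)) :
    IsLeftDescent k w ∧ IsBruhatCover (sB k * w) r s ↔
      IsBruhatCover w r s ∧ IsLeftDescent k (w * signedSwap r s) := by
  obtain ⟨N, hN, hNt⟩ := hw.exists_mul_signedSwap hr hs
  have hiff := hw.invNum_sB_mul_lt_mul_signedSwap_iff hr hs hne
  rw [← hN.invNum_sB_mul_lt_iff, ← hNt.invNum_sB_mul_lt_iff]
  have h1 := hN.invNum_le_add_one k
  have h2 := hNt.invNum_le_add_one k
  have h3 := (hN.sB_mul_add k).invNum_le_add_one k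
  have h4 := (hNt.sB_mul_add k).invNum_le_add_one k
  rw [sB_mul_sB_mul] at h3 h4
  unfold IsBruhatCover
  rw [mul_assoc] at hiff ⊢
  omega

theorem sum_sign_sB_sub {v : ℤ} (hv : v ≠ 0) (hvn : |v| ≤ n) :
    ∑ k ∈ Finset.range (n + 1), (sB k v - v).sign = 0 := by
  wlog hpos : 0 < v generalizing v
  · have hneg := this (neg_ne_zero.2 hv) (by rwa [abs_neg]) (by omega)
    simp only [sB_neg, ← neg_sub', Int.sign_neg, Finset.sum_neg_distrib, neg_eq_zero] at hneg
    exact hneg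
  rw [abs_of_pos hpos] at hvn
  have hsign (k : ℕ) : (sB k v - v).sign =
      (if k = v.toNat then 1 else 0) - (if k = (v - 1).toNat then 1 else 0) := by
    have hlow := lowerValue_cases k
    have hup : k = v.toNat → sB k v - v = 1 := by
      rw [sB_apply]
      split_ifs <;> omega
    have hdown : k = (v - 1).toNat → sB k v - v < 0 := by
      rw [sB_apply]
      split_ifs <;> omega
    have hfix : k ≠ v.toNat → k ≠ (v - 1).toNat → sB k v - v = 0 := by
      rw [sB_apply]
      split_ifs <;> omega
    split_ifs with h₁ h₂ h₂
    · omega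
    · rw [hup h₁]
      rfl
    · rw [Int.sign_eq_neg_one_of_neg (hdown h₂)]
      rfl
    · rw [hfix h₁ h₂]
      rfl
  simp only [hsign, Finset.sum_sub_distrib, Finset.sum_ite_eq', Finset.mem_range]
  rw [if_pos (by omega), if_pos (by omega), sub_self]

theorem IsSignedPerm.isBruhatCover_of_mul_eq_sB_mul (hw : IsSignedPerm n w)
    (h : w * signedSwap r s = sB k * w) : IsBruhatCover w r s ↔ ¬ IsLeftDescent k w := by
  rw [IsBruhatCover, h]
  by_cases hk : IsLeftDescent k w
  · have := hw.invNum_sB_mul_add_one hk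
    simp only [hk, not_true, iff_false]
    omega
  · simp only [hk, not_false_iff, hw.invNum_sB_mul_of_not hk]

theorem IsSignedPerm.sign_sB_sub_eq (hw : IsSignedPerm n w) (h : w s = sB k (w r)) :
    (sB k (w r) - w r).sign = if IsLeftDescent k w then -(s - r).sign else (s - r).sign := by
  have hs : w⁻¹ (w s) = s := Equiv.Perm.inv_eq_iff_eq.2 rfl
  have hr : w⁻¹ (w r) = r := Equiv.Perm.inv_eq_iff_eq.2 rfl
  rw [← h]
  rcases lt_trichotomy (w r) (w s) with hlt | heq | hgt
  · have hdesc := hw.isLeftDescent_iff_of_lt (h ▸ hlt)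
    rw [← h, hs, hr] at hdesc
    have hne : s ≠ r := fun h => hlt.ne (by rw [h])
    rw [Int.sign_eq_one_of_pos (by omega)]
    split_ifs with hk
    · rw [Int.sign_eq_neg_one_of_neg (by have := hdesc.1 hk; omega), neg_neg]
    · rw [Int.sign_eq_one_of_pos (by rw [hdesc] at hk; omega)]
  · rw [w.injective heq, sub_self, sub_self, Int.sign_zero, neg_zero, ite_self]
  · have h' : w r = sB k (w s) := by rw [h, sB_sB]
    have hdesc := hw.isLeftDescent_iff_of_lt (h' ▸ hgt)
    rw [← h', hs, hr] at hdesc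
    have hne : s ≠ r := fun h => hgt.ne (by rw [h])
    rw [Int.sign_eq_neg_one_of_neg (by omega)]
    split_ifs with hk
    · rw [Int.sign_eq_one_of_pos (by have := hdesc.1 hk; omega)]
    · rw [Int.sign_eq_neg_one_of_neg (by rw [hdesc] at hk; omega)]

/-- The signed count of the reduced words of the Bruhat covers `w * signedSwap r s`. -/
noncomputable def transitionSum (n : ℕ) (w : Equiv.Perm ℤ) (r : ℤ) : ℤ :=
  ∑ s ∈ bruhatCovers n w r, (s - r).sign * redCount (w * signedSwap r s)

theorem IsSignedPerm.transition_term_eq (hw : IsSignedPerm n w) (hr : r ≠ 0) (hs : s ≠ 0) :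
    (if IsBruhatCover w r s ∧ IsLeftDescent k (w * signedSwap r s) then
        (s - r).sign * (redCount (sB k * (w * signedSwap r s)) : ℤ) else 0) =
      (if IsLeftDescent k w ∧ IsBruhatCover (sB k * w) r s then
        (s - r).sign * (redCount (sB k * w * signedSwap r s) : ℤ) else 0) +
      if s = w⁻¹ (sB k (w r)) then redCount w * (sB k (w r) - w r).sign else 0 := by
  simp only [eq_comm (a := s), Equiv.Perm.inv_eq_iff_eq, eq_comm (b := w s)]
  by_cases h : w s = sB k (w r)
  · rw [if_pos h, hw.sign_sB_sub_eq h]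
    by_cases hsr : s = r
    · subst hsr
      simp only [sub_self, Int.sign_zero, zero_mul, neg_zero, mul_zero, ite_self, add_zero]
    have hmul := (hw.mul_signedSwap_eq_sB_mul_iff hr hs (Ne.symm hsr)).2 h
    have hmul' : sB k * w * signedSwap r s = sB k * (sB k * w) := by
      rw [mul_assoc, hmul]
    simp only [hw.isBruhatCover_of_mul_eq_sB_mul hmul, hmul', hmul, isLeftDescent_sB_mul,
      (hw.sB_mul_add k).isBruhatCover_of_mul_eq_sB_mul hmul', sB_mul_sB_mul]
    split_ifs <;> first | tauto | ring
  · rw [if_neg h, add_zero, mul_assoc]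
    exact if_congr (hw.isBruhatCover_sB_mul_iff hr hs h).symm rfl rfl

theorem transitionSum_eq_sum_ite (n : ℕ) (w : Equiv.Perm ℤ) (r : ℤ) :
    transitionSum n w r =
      ∑ s ∈ (Finset.Icc (-(n + 1 : ℤ)) (n + 1)).filter (· ≠ 0),
        if IsBruhatCover w r s then (s - r).sign * (redCount (w * signedSwap r s) : ℤ) else 0 := by
  rw [transitionSum, bruhatCovers, ← Finset.filter_filter, Finset.sum_filter]

theorem redCount_eq_sum_of_cover (h : IsBruhatCover w r s)
    (hwt : IsSignedPerm n (w * signedSwap r s)) :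
    redCount (w * signedSwap r s) = ∑ k ∈ Finset.range n,
      if IsLeftDescent k (w * signedSwap r s) then redCount (sB k * (w * signedSwap r s))
      else 0 := by
  have h1 : w * signedSwap r s ≠ 1 := fun h1 => by
    rw [IsBruhatCover, h1, invNum_one] at h
    omega
  rw [hwt.redCount_eq_sum h1, leftDescents, Finset.sum_filter]

theorem IsSignedPerm.sum_ite_eq_sB_apply (hw : IsSignedPerm n w) (hr : r ≠ 0) (hrn : |r| ≤ n)
    (hk : k ≤ n) (c : ℤ) :
    (∑ s ∈ (Finset.Icc (-(n + 1 : ℤ)) (n + 1)).filter (· ≠ 0),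
      if s = w⁻¹ (sB k (w r)) then c else 0) = c := by
  rw [Finset.sum_ite_eq', if_pos]
  have hw' := hw.mono (N := n + 1) (by omega)
  have hval := (isSignedPerm_sB (Nat.lt_succ_of_le hk)).abs_apply_le
    (hw'.abs_apply_le (hrn.trans (by exact_mod_cast n.le_succ)))
  have hpos := abs_le.1 (hw'.inv.abs_apply_le hval)
  rw [Finset.mem_filter, Finset.mem_Icc]
  push_cast at hpos
  exact ⟨hpos, mt hw.inv.map_eq_zero_iff.1 (sB_ne_zero (mt hw.map_eq_zero_iff.1 hr) k)⟩

theorem IsSignedPerm.transitionSum_eq (hw : IsSignedPerm n w) (hr : r ≠ 0) (hrn : |r| ≤ n) :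
    transitionSum n w r = ∑ k ∈ Finset.range (n + 1),
      if IsLeftDescent k w then transitionSum n (sB k * w) r else 0 := by
  set S := (Finset.Icc (-(n + 1 : ℤ)) (n + 1)).filter (· ≠ 0)
  have hexpand : transitionSum n w r = ∑ s ∈ S, ∑ k ∈ Finset.range (n + 1),
      if IsBruhatCover w r s ∧ IsLeftDescent k (w * signedSwap r s) then
        (s - r).sign * (redCount (sB k * (w * signedSwap r s)) : ℤ) else 0 := by
    rw [transitionSum_eq_sum_ite]
    refine Finset.sum_congr rfl fun s hs => ?_
    rw [Finset.mem_filter, Finset.mem_Icc] at hs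
    split_ifs with hcov
    · have hw' := hw.mono (N := n + 1) (by omega)
      have hwt := hw'.mul_signedSwap hr hs.2 (hrn.trans (by exact_mod_cast n.le_succ))
        (by rw [abs_le]; push_cast; omega)
      rw [redCount_eq_sum_of_cover hcov hwt, Nat.cast_sum, Finset.mul_sum]
      simp only [hcov, true_and, Nat.cast_ite, mul_ite, Nat.cast_zero, mul_zero]
    · simp only [hcov, false_and, if_false, Finset.sum_const_zero]
  have hsum : ∀ k ∈ Finset.range (n + 1), (∑ s ∈ S,
      if IsBruhatCover w r s ∧ IsLeftDescent k (w * signedSwap r s) then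
        (s - r).sign * (redCount (sB k * (w * signedSwap r s)) : ℤ) else 0) =
      (if IsLeftDescent k w then transitionSum n (sB k * w) r else 0) +
        redCount w * (sB k (w r) - w r).sign := fun k hk => by
    rw [Finset.sum_congr rfl fun s hs =>
        hw.transition_term_eq hr (Finset.mem_filter.1 hs).2,
      Finset.sum_add_distrib,
      hw.sum_ite_eq_sB_apply hr hrn (Nat.lt_succ_iff.1 (Finset.mem_range.1 hk)),
      transitionSum_eq_sum_ite]
    split_ifs with hdesc
    · simp only [hdesc, true_and]
    · simp only [hdesc, false_and, if_false, Finset.sum_const_zero]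
  rw [hexpand, Finset.sum_comm, Finset.sum_congr rfl hsum, Finset.sum_add_distrib,
    ← Finset.mul_sum, sum_sign_sB_sub (mt hw.map_eq_zero_iff.1 hr) (hw.abs_apply_le hrn),
    mul_zero, add_zero]

/-- Billey's transition equation. -/
theorem IsSignedPerm.transitionSum_eq_zero (hw : IsSignedPerm n w) (hr : r ≠ 0) (hrn : |r| ≤ n) :
    transitionSum n w r = 0 := by
  induction h : invNum w using Nat.strong_induction_on generalizing w with
  | _ m ih =>
    rw [hw.transitionSum_eq hr hrn]
    refine Finset.sum_eq_zero fun k _ => ?_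
    split_ifs with hk
    · have := hw.invNum_sB_mul_add_one hk
      exact ih _ (by omega) (hw.sB_mul (hw.lt_of_isLeftDescent hk)) rfl
    · rfl

theorem IsSignedPerm.not_isBruhatCover_of_between (hw : IsSignedPerm n w) {q : ℤ} (hr : r ≠ 0)
    (hq : q ≠ 0) (hs : s ≠ 0) (hrq : r < q) (hqs : q < s) (hq_r : q ≠ -r) (hs_q : s ≠ -q)
    (hs_r : s ≠ -r) (hwrq : w r < w q) (hwqs : w q < w s) : ¬ IsBruhatCover w r s := by
  have hfix_s : signedSwap r q s = s :=
    signedSwap_apply_of_ne hr hq (by omega) (by omega) (by omega) (by omega)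
  have hconj : signedSwap r q * signedSwap q s * signedSwap r q = signedSwap r s := by
    obtain ⟨_, -, hrq'⟩ := (IsSignedPerm.one (n := 0)).exists_mul_signedSwap hr hq
    rw [one_mul] at hrq'
    rw [hrq'.mul_signedSwap_eq hq hs, signedSwap_apply_right hr hq, hfix_s,
      mul_signedSwap_mul_signedSwap hr hq]
  have hfix_r : signedSwap q s r = r :=
    signedSwap_apply_of_ne hq hs (by omega) (by omega) (by omega) (by omega)
  have hprod : w * signedSwap r q * signedSwap q s * signedSwap r q = w * signedSwap r s := by
    rw [← hconj, mul_assoc, mul_assoc, mul_assoc]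
  obtain ⟨N, -, h₁⟩ := hw.exists_mul_signedSwap hr hq
  obtain ⟨M, -, h₂⟩ := h₁.exists_mul_signedSwap hq hs
  have asc₁ := (hw.invNum_lt_mul_signedSwap_iff hr hq hrq).2 hwrq
  have asc₂ := (h₁.invNum_lt_mul_signedSwap_iff hq hs hqs).2 (by
    rw [Equiv.Perm.mul_apply, Equiv.Perm.mul_apply, signedSwap_apply_right hr hq, hfix_s]
    exact hwrq.trans hwqs)
  have asc₃ := (h₂.invNum_lt_mul_signedSwap_iff hr hq hrq).2 (by
    simp only [Equiv.Perm.mul_apply, hfix_r, signedSwap_apply_left hr hq,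
      signedSwap_apply_left hq hs, hfix_s]
    exact hwqs)
  rw [hprod] at asc₃
  rw [IsBruhatCover]
  omega

theorem exists_lt_sB_forall_le {x : ℤ} (hx : x ≠ 0) :
    ∃ k : ℕ, x < sB k x ∧ ∀ z ≠ 0, x < z → sB k x ≤ z ∧ ((k : ℤ) < |x| ∨ (k : ℤ) < |z|) := by
  refine ⟨(if 0 < x then x else -x - 1).toNat, ?_⟩
  have hval : sB (if 0 < x then x else -x - 1).toNat x = if x = -1 then 1 else x + 1 := by
    rw [sB_apply, lowerValue]
    split_ifs <;> omega
  rw [hval]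
  refine ⟨by split_ifs <;> omega, fun z hz hxz => ⟨by split_ifs <;> omega, ?_⟩⟩
  rw [lt_abs, lt_abs]
  split_ifs <;> omega

theorem IsSignedPerm.no_between_sB_mul (hw : IsSignedPerm n w) (hr : r ≠ 0) (hs : s ≠ 0)
    (hk : w r < sB k (w r)) (hks : sB k (w r) < w s)
    (hbtw : ∀ q, r < q → q < s → w r < w q → w s ≤ w q) {q : ℤ} (hrq : r < q) (hqs : q < s)
    (hq : (sB k * w) r < (sB k * w) q) : (sB k * w) s ≤ (sB k * w) q := by
  simp only [Equiv.Perm.mul_apply] at hq ⊢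
  have hr' := mt hw.map_eq_zero_iff.1 hr
  have hs' := mt hw.map_eq_zero_iff.1 hs
  have hraise := lt_sB_iff.1 hk
  have hlow := lowerValue_cases k
  by_cases hq0 : q = 0
  · have hzero : w q = 0 := hw.map_eq_zero_iff.2 hq0
    have hsB_zero : sB k 0 = 0 := (isSignedPerm_sB k.lt_succ_self).map_zero
    have := hbtw q hrq hqs
    rw [hzero, hsB_zero] at hq ⊢
    rw [sB_apply]
    unfold lowerValue at *
    split_ifs at * <;> omega
  · have hq' := mt hw.map_eq_zero_iff.1 hq0
    have hwrq : w r < w q := (sB_lt_sB_iff_of_ne hr' hq' fun h => by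
      rw [← h, sB_sB] at hq
      exact hq.not_gt hk).1 hq
    have hwsq : w s < w q := (hbtw q hrq hqs hwrq).lt_of_ne fun h => hqs.ne (w.injective h).symm
    refine (sB_lt_sB hs' hq' hwsq fun h => ?_).le
    have hraise_s := lt_sB_iff.1 (h ▸ hwsq)
    have hneg : w q = w (-r) := by
      rw [hw.1, ← h]
      rcases hraise_s with hs_eq | hs_eq
      · rw [hs_eq, sB_lowerValue]
        omega
      · rw [hs_eq, sB_neg, sB_succ]
        omega
    have hq_r := w.injective hneg
    have := hbtw 0 (by omega) (by omega)
    rw [hw.map_zero] at this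
    omega

theorem IsSignedPerm.not_isLeftDescent_mul_signedSwap (hw : IsSignedPerm n w) (hr : r ≠ 0)
    (hs : s ≠ 0) (hrs : r < s) (hk : w r < sB k (w r)) (hks : sB k (w r) < w s)
    (hbtw : ∀ q, r < q → q < s → w r < w q → w s ≤ w q) (hdesc : ¬ IsLeftDescent k w) :
    ¬ IsLeftDescent k (w * signedSwap r s) := by
  obtain ⟨N, -, hwt⟩ := hw.exists_mul_signedSwap hr hs
  obtain ⟨q, hq⟩ := w.surjective (sB k (w r))
  have hwt_s : (w * signedSwap r s) s = w r := by
    rw [Equiv.Perm.mul_apply, signedSwap_apply_right hr hs]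
  have hwt_q : (w * signedSwap r s)⁻¹ (sB k (w r)) = signedSwap r s q := by
    rw [mul_inv_rev, signedSwap_inv hr hs, Equiv.Perm.mul_apply,
      Equiv.Perm.inv_eq_iff_eq.2 hq.symm]
  rw [hw.isLeftDescent_iff_of_lt hk, Equiv.Perm.inv_eq_iff_eq.2 hq.symm,
    Equiv.Perm.inv_eq_iff_eq.2 rfl] at hdesc
  have hqr : q ≠ r := by rintro rfl; omega
  have hqs : q ≠ s := by rintro rfl; omega
  have hsq : s < q := by
    have := hbtw q
    omega
  rw [← hwt_s] at hk
  have hmain := hwt.isLeftDescent_iff_of_lt hk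
  rw [hwt_s, hwt_q, ← hwt_s, Equiv.Perm.inv_eq_iff_eq.2 rfl, signedSwap_apply hr hs,
    if_neg hqr, if_neg hqs] at hmain
  rw [hmain]
  have hneg := hw.1 r
  have hzero := hbtw 0
  rw [hw.map_zero] at hzero
  by_cases h₁ : q = -r
  · rw [h₁, hneg] at hq
    rw [hwt_s] at hk
    rw [if_pos h₁]
    omega
  · rw [if_neg h₁]
    split_ifs <;> omega

theorem IsSignedPerm.isBruhatCover (hw : IsSignedPerm n w) (hr : r ≠ 0) (hs : s ≠ 0)
    (hrn : |r| ≤ n) (hsn : |s| ≤ n) (hrs : r < s) (hlt : w r < w s)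
    (hbtw : ∀ q, r < q → q < s → w r < w q → w s ≤ w q) : IsBruhatCover w r s := by
  induction h : (n - w r).toNat using Nat.strong_induction_on generalizing w with
  | _ m ih =>
    have hr' := mt hw.map_eq_zero_iff.1 hr
    have hs' := mt hw.map_eq_zero_iff.1 hs
    have hrn' := hw.abs_apply_le hrn
    have hsn' := hw.abs_apply_le hsn
    obtain ⟨k, hk, hnext⟩ := exists_lt_sB_forall_le hr'
    obtain ⟨hle, hkn⟩ := hnext _ hs' hlt
    by_cases heq : w s = sB k (w r)
    · have hmul := (hw.mul_signedSwap_eq_sB_mul_iff hr hs hrs.ne).2 heq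
      rw [hw.isBruhatCover_of_mul_eq_sB_mul hmul, hw.isLeftDescent_iff_of_lt hk, ← heq,
        Equiv.Perm.inv_eq_iff_eq.2 rfl, Equiv.Perm.inv_eq_iff_eq.2 rfl]
      exact hrs.not_gt
    · have hks := hle.lt_of_ne (Ne.symm heq)
      have hsw := hw.sB_mul (k := k) (by omega)
      have hcov : IsBruhatCover (sB k * w) r s := by
        refine ih _ ?_ hsw ?_ (fun q hrq hqs => hw.no_between_sB_mul hr hs hk hks hbtw hrq hqs) rfl
        · have := (abs_le.1 hsn').2
          rw [Equiv.Perm.mul_apply]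
          omega
        · exact sB_lt_sB hr' hs' hlt (Ne.symm heq)
      by_cases hdesc : IsLeftDescent k w
      · exact ((hw.isBruhatCover_sB_mul_iff hr hs heq).1 ⟨hdesc, hcov⟩).1
      · have hdesc' := hw.not_isLeftDescent_mul_signedSwap hr hs hrs hk hks hbtw hdesc
        rw [← isLeftDescent_sB_mul, ← mul_assoc] at hdesc'
        have := ((hsw.isBruhatCover_sB_mul_iff hr hs fun h => heq (by
          simpa only [Equiv.Perm.mul_apply, sB_sB] using congrArg (sB k) h)).2 ⟨hcov, hdesc'⟩).2
        rwa [sB_mul_sB_mul] at this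

end Bruhat

/-! ### Shifted codes and the transition step -/

/-- The entry `w q` is negative, and the positions in `[1, q)` with a value exceeding `w q` are
exactly the first `l + w q`. In `w^λ` this happens for every negative entry, and the lengths `l`
are the parts of `λ`. -/
structure IsRowAt (w : Equiv.Perm ℤ) (q l : ℤ) : Prop where
  one_le : 1 ≤ q
  map_neg : w q < 0
  nonneg : 0 ≤ l + w q
  lt : l + w q < q
  lt_iff : ∀ x, 1 ≤ x → x < q → (w q < w x ↔ x ≤ l + w q)

/-- The positive entries of `w` are left-to-right maxima, and the negative ones are rows in the
sense of `IsRowAt` whose set of lengths is `Λ`. -/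
structure HasShiftedCode (w : Equiv.Perm ℤ) (Λ : Set ℤ) : Prop where
  lt_of_pos : ∀ i j, 1 ≤ i → i < j → 0 < w j → w i < w j
  exists_row : ∀ q, 1 ≤ q → w q < 0 → ∃ l ∈ Λ, IsRowAt w q l
  exists_position : ∀ l ∈ Λ, ∃ q, IsRowAt w q l

/-- The window of `w` is increasing after position `r`, and `s` is the last position after `r` with
a value less than `w r`. -/
structure IsLastDescent (w : Equiv.Perm ℤ) (r s : ℤ) : Prop where
  one_le : 1 ≤ r
  lt : r < s
  map_lt : w s < w r
  increasing : ∀ x y, r < x → x < y → w x < w y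
  lt_map_of_lt : ∀ x, s < x → w r < w x

/-- The elements `v` at which the transition equation is applied: `v = w * signedSwap r s`, where
`w` has shifted code `Λ` and `IsLastDescent w r s`, with `a = -w s`. The row of `w` at `s` has
length `a + r`, and every other row of `w` is a row of `v` at a position different from `r`. -/
structure IsPivot (v : Equiv.Perm ℤ) (r s a : ℤ) (Λ : Set ℤ) : Prop where
  one_le : 1 ≤ r
  lt : r < s
  pos : 0 < a
  map_eq : v r = -a
  increasing : ∀ x y, r < x → x < y → v x < v y
  map_lt : ∀ x, r < x → x < s → v x < -a
  lt_map_left : ∀ x, 1 ≤ x → x < r → -a < v x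
  lt_map_right : ∀ x, s ≤ x → -a < v x
  lt_of_pos : ∀ i j, 1 ≤ i → i < j → 0 < v j → v i < v j
  exists_row : ∀ q, 1 ≤ q → q ≠ r → v q < 0 → ∃ l ∈ Λ, IsRowAt v q l
  exists_position : ∀ l ∈ Λ, l = a + r ∨ ∃ q ≠ r, IsRowAt v q l
  mem : a + r ∈ Λ

/-- The position `p` has the least value `c` exceeding `a` among all positive positions. -/
structure IsNextAbove (v : Equiv.Perm ℤ) (a c p : ℤ) : Prop where
  one_le : 1 ≤ p
  map_eq : v p = c
  lt : a < c
  le_map : ∀ x, 1 ≤ x → a < v x → c ≤ v x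

section Pivot

variable {n : ℕ} {w v : Equiv.Perm ℤ} {Λ : Set ℤ} {r s a c p : ℤ}

theorem IsRowAt.of_lt_iff {q l : ℤ} (h : IsRowAt w q l) (hq : v q = w q)
    (hlt : ∀ x, 1 ≤ x → x < q → (w q < v x ↔ w q < w x)) : IsRowAt v q l where
  one_le := h.one_le
  map_neg := hq ▸ h.map_neg
  nonneg := hq ▸ h.nonneg
  lt := hq ▸ h.lt
  lt_iff x hx hxq := by rw [hq, hlt x hx hxq, h.lt_iff x hx hxq]

theorem IsRowAt.add_map_eq {l : ℤ} (h : IsRowAt w s l) (hr : 1 ≤ r) (hrs : r < s)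
    (hlt : w s < w r) (hbtw : ∀ x, r < x → x < s → w x < w s) : l + w s = r := by
  have hle := (h.lt_iff r hr hrs).1 hlt
  by_contra hne
  have hm := h.lt
  exact ((h.lt_iff (l + w s) (by omega) hm).2 le_rfl).not_gt (hbtw _ (by omega) hm)

namespace IsLastDescent

variable {q l : ℤ}

theorem map_of_ne (h : IsLastDescent w r s) {x : ℤ} (hx : 1 ≤ x) (hr : x ≠ r) (hs : x ≠ s) :
    (w * signedSwap r s) x = w x := by
  have := h.one_le
  have := h.lt
  exact mul_signedSwap_apply_of_ne (by omega) (by omega) w hr hs (by omega) (by omega)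

theorem map_left (h : IsLastDescent w r s) : (w * signedSwap r s) r = w s := by
  have := h.one_le
  have := h.lt
  exact mul_signedSwap_apply_left (by omega) (by omega) w

theorem map_right (h : IsLastDescent w r s) : (w * signedSwap r s) s = w r := by
  have := h.one_le
  have := h.lt
  exact mul_signedSwap_apply_right (by omega) (by omega) w

theorem add_map_eq (h : IsLastDescent w r s) (hrow : IsRowAt w s l) : l + w s = r :=
  hrow.add_map_eq h.one_le h.lt h.map_lt fun x hrx hxs => h.increasing x s hrx hxs

theorem isRowAt_mul_signedSwap_of_ne (h : IsLastDescent w r s) (hr : q ≠ r) (hs : q ≠ s)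
    (hrow : IsRowAt w q l) : IsRowAt (w * signedSwap r s) q l := by
  have hmap {x : ℤ} := h.map_of_ne (x := x)
  refine hrow.of_lt_iff (hmap hrow.one_le hr hs) fun x hx hxq => ?_
  have hrq := h.increasing q s
  have hsq := h.lt_map_of_lt q
  have := h.lt
  have := h.map_lt
  by_cases hxr : x = r
  · rw [hxr, h.map_left]
    omega
  · by_cases hxs : x = s
    · rw [hxs, h.map_right]
      omega
    · rw [hmap hx hxr hxs]

theorem isRowAt_mul_signedSwap (h : IsLastDescent w r s) (hrow : IsRowAt w r l) :
    IsRowAt (w * signedSwap r s) s l where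
  one_le := hrow.one_le.trans h.lt.le
  map_neg := h.map_right ▸ hrow.map_neg
  nonneg := h.map_right ▸ hrow.nonneg
  lt := h.map_right ▸ hrow.lt.trans h.lt
  lt_iff x hx hxs := by
    have := hrow.lt
    have := h.map_lt
    rw [h.map_right]
    rcases lt_trichotomy x r with hxr | rfl | hrx
    · rw [h.map_of_ne hx hxr.ne hxs.ne, hrow.lt_iff x hx hxr]
    · rw [h.map_left]
      omega
    · have := h.increasing x s hrx hxs
      rw [h.map_of_ne hx hrx.ne' hxs.ne]
      omega

theorem map_neg (h : IsLastDescent w r s) (hw : IsSignedPerm n w) (hc : HasShiftedCode w Λ) :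
    w s < 0 := by
  have hs : w s ≠ 0 := mt hw.map_eq_zero_iff.1 (by have := h.one_le.trans_lt h.lt; omega)
  by_contra hneg
  exact h.map_lt.not_gt (hc.lt_of_pos r s h.one_le h.lt (by omega))

theorem increasing_mul_signedSwap (h : IsLastDescent w r s) (x y : ℤ) (hrx : r < x)
    (hxy : x < y) : (w * signedSwap r s) x < (w * signedSwap r s) y := by
  have hr := h.one_le
  have hrs := h.lt
  have hlt := h.map_lt
  have hinc := h.increasing
  rcases eq_or_ne x s with rfl | hxs
  · rw [h.map_right, h.map_of_ne (by omega) (by omega) hxy.ne']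
    exact h.lt_map_of_lt y hxy
  rw [h.map_of_ne (by omega) hrx.ne' hxs]
  rcases eq_or_ne y s with rfl | hys
  · rw [h.map_right]
    exact (hinc x y hrx hxy).trans hlt
  · rw [h.map_of_ne (by omega) (by omega) hys]
    exact hinc x y hrx hxy

theorem lt_of_pos_mul_signedSwap (h : IsLastDescent w r s) (hs : w s < 0)
    (hc : HasShiftedCode w Λ) (i j : ℤ) (hi : 1 ≤ i) (hij : i < j)
    (hj : 0 < (w * signedSwap r s) j) :
    (w * signedSwap r s) i < (w * signedSwap r s) j := by
  have hr := h.one_le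
  have hrs := h.lt
  have hlt := h.map_lt
  have hjr : j ≠ r := by
    rintro rfl
    rw [h.map_left] at hj
    omega
  rcases eq_or_ne i r with rfl | hir
  · rw [h.map_left]
    omega
  rcases lt_or_gt_of_ne hjr with hjr | hrj
  · rw [h.map_of_ne (by omega) hjr.ne (by omega)] at hj ⊢
    rw [h.map_of_ne hi hir (by omega)]
    exact hc.lt_of_pos i j hi hij hj
  rcases lt_or_gt_of_ne hir with hir | hri
  · rw [h.map_of_ne hi hir.ne (by omega)]
    rcases eq_or_ne j s with rfl | hjs
    · rw [h.map_right] at hj ⊢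
      exact hc.lt_of_pos i r hi hir hj
    · rw [h.map_of_ne (by omega) hrj.ne' hjs] at hj ⊢
      exact hc.lt_of_pos i j hi hij hj
  · exact h.increasing_mul_signedSwap i j hri hij

theorem exists_isRowAt_mul_signedSwap (h : IsLastDescent w r s) (hc : HasShiftedCode w Λ)
    (hq : 1 ≤ q) (hqr : q ≠ r) (hneg : (w * signedSwap r s) q < 0) :
    ∃ l ∈ Λ, IsRowAt (w * signedSwap r s) q l := by
  rcases eq_or_ne q s with rfl | hqs
  · rw [h.map_right] at hneg
    obtain ⟨l, hl, hrow⟩ := hc.exists_row r h.one_le hneg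
    exact ⟨l, hl, h.isRowAt_mul_signedSwap hrow⟩
  · rw [h.map_of_ne hq hqr hqs] at hneg
    obtain ⟨l, hl, hrow⟩ := hc.exists_row q hq hneg
    exact ⟨l, hl, h.isRowAt_mul_signedSwap_of_ne hqr hqs hrow⟩

theorem eq_or_exists_isRowAt_mul_signedSwap (h : IsLastDescent w r s)
    (hc : HasShiftedCode w Λ) (hl : l ∈ Λ) :
    l = -w s + r ∨ ∃ q ≠ r, IsRowAt (w * signedSwap r s) q l := by
  obtain ⟨q, hrow⟩ := hc.exists_position l hl
  rcases eq_or_ne q s with rfl | hqs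
  · have := h.add_map_eq hrow
    exact .inl (by omega)
  rcases eq_or_ne q r with rfl | hqr
  · exact .inr ⟨s, h.lt.ne', h.isRowAt_mul_signedSwap hrow⟩
  · exact .inr ⟨q, hqr, h.isRowAt_mul_signedSwap_of_ne hqr hqs hrow⟩

theorem isPivot (h : IsLastDescent w r s) (hw : IsSignedPerm n w) (hc : HasShiftedCode w Λ) :
    IsPivot (w * signedSwap r s) r s (-w s) Λ := by
  have hr := h.one_le
  have hrs := h.lt
  have hlt := h.map_lt
  have hneg := h.map_neg hw hc
  have hmap {x : ℤ} := h.map_of_ne (x := x)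
  obtain ⟨l₀, hl₀, hrow₀⟩ := hc.exists_row s (by omega) hneg
  have hl₀_eq := h.add_map_eq hrow₀
  exact {
    one_le := hr
    lt := hrs
    pos := neg_pos.2 hneg
    map_eq := by rw [h.map_left, neg_neg]
    increasing := h.increasing_mul_signedSwap
    map_lt x hrx hxs := by
      rw [hmap (by omega) hrx.ne' hxs.ne, neg_neg]
      exact h.increasing x s hrx hxs
    lt_map_left x hx hxr := by
      rw [hmap hx hxr.ne (by omega), neg_neg, hrow₀.lt_iff x hx (by omega)]
      omega
    lt_map_right x hsx := by
      rcases hsx.eq_or_lt with rfl | hsx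
      · rwa [h.map_right, neg_neg]
      · rw [hmap (by omega) (by omega) hsx.ne', neg_neg]
        exact hlt.trans (h.lt_map_of_lt x hsx)
    lt_of_pos := h.lt_of_pos_mul_signedSwap hneg hc
    exists_row _ := h.exists_isRowAt_mul_signedSwap hc
    exists_position l hl := h.eq_or_exists_isRowAt_mul_signedSwap hc hl
    mem := by
      rwa [show -w s + r = l₀ by omega] }

end IsLastDescent

end Pivot

namespace IsPivot

variable {n : ℕ} {v : Equiv.Perm ℤ} {Λ : Set ℤ} {r s a c p : ℤ}

theorem ne_right (h : IsPivot v r s a Λ) (hp : IsNextAbove v a c p) : p ≠ r := by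
  rintro rfl
  have := hp.map_eq
  have := h.map_eq
  have := hp.lt
  have := h.pos
  omega

theorem map_of_ne (h : IsPivot v r s a Λ) (hp : IsNextAbove v a c p) {x : ℤ} (hx : 1 ≤ x)
    (hxr : x ≠ r) (hxp : x ≠ p) : (v * signedSwap r (-p)) x = v x := by
  have := h.one_le
  have := hp.one_le
  exact mul_signedSwap_apply_of_ne (by omega) (by omega) v hxr (by omega) (by omega) (by omega)

theorem map_pivot (h : IsPivot v r s a Λ) (hp : IsNextAbove v a c p) (hv : IsSignedPerm n v) :
    (v * signedSwap r (-p)) r = -c := by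
  have := h.one_le
  have := hp.one_le
  rw [mul_signedSwap_apply_left (by omega) (by omega), hv.1, hp.map_eq]

theorem map_partner (h : IsPivot v r s a Λ) (hp : IsNextAbove v a c p) (hv : IsSignedPerm n v) :
    (v * signedSwap r (-p)) p = a := by
  have := h.one_le
  have := hp.one_le
  have hr : -r ≠ 0 := by omega
  have hp' : p ≠ 0 := by omega
  rw [← signedSwap_neg_neg (by omega) (by omega), neg_neg, mul_signedSwap_apply_right hr hp',
    hv.1, h.map_eq, neg_neg]

/-- By the choice of `c`, the values strictly between `-c` and `-a` all sit between `r` and `s`. -/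
theorem exists_map_eq_neg (h : IsPivot v r s a Λ) (hp : IsNextAbove v a c p)
    (hv : IsSignedPerm n v) {b : ℤ} (hab : a < b) (hbc : b < c) :
    ∃ y, r < y ∧ y < s ∧ v y = -b := by
  obtain ⟨x, rfl⟩ := v.surjective b
  have hpos := h.pos
  have hx0 : x ≠ 0 := fun hx => by rw [hv.map_eq_zero_iff.2 hx] at hab; omega
  have hneg := hv.1 x
  have hx : x < 0 := by
    by_contra hx
    have := hp.le_map x (by omega) hab
    omega
  have hr := h.map_eq
  have hleft := h.lt_map_left (-x) (by omega)
  have hright := h.lt_map_right (-x)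
  have hne : -x ≠ r := by rintro hxr; rw [hxr] at hneg; omega
  exact ⟨-x, by omega, by omega, hneg⟩

theorem add_map_eq_of_between (h : IsPivot v r s a Λ) {y l : ℤ} (hry : r < y) (hys : y < s)
    (hrow : IsRowAt v y l) : l + v y = r := by
  have hr := h.map_eq
  have := h.map_lt y hry hys
  exact hrow.add_map_eq h.one_le hry (by omega) fun x hrx hxy => h.increasing x y hrx hxy

theorem add_mem (h : IsPivot v r s a Λ) (hp : IsNextAbove v a c p) (hv : IsSignedPerm n v)
    {b : ℤ} (hab : a ≤ b) (hbc : b < c) : b + r ∈ Λ := by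
  rcases hab.eq_or_lt with rfl | hab
  · exact h.mem
  have hr := h.one_le
  have hpos := h.pos
  obtain ⟨y, hry, hys, hy⟩ := h.exists_map_eq_neg hp hv hab hbc
  obtain ⟨l, hl, hrow⟩ := h.exists_row y (by omega) hry.ne' (by omega)
  have := h.add_map_eq_of_between hry hys hrow
  rwa [show b + r = l by omega]

theorem isRowAt_pivot (h : IsPivot v r s a Λ) (hp : IsNextAbove v a c p)
    (hv : IsSignedPerm n v) : IsRowAt (v * signedSwap r (-p)) r (c + r - 1) := by
  have hr := h.one_le
  have hpos := h.pos
  have hac := hp.lt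
  have hmap := h.map_pivot hp hv
  refine ⟨hr, by omega, by omega, by omega, fun x hx hxr => ?_⟩
  have hleft := h.lt_map_left x hx hxr
  rw [hmap]
  rcases eq_or_ne x p with rfl | hxp
  · rw [h.map_partner hp hv]
    omega
  · rw [h.map_of_ne hp hx hxr.ne hxp]
    omega

theorem isRowAt_of_between (h : IsPivot v r s a Λ) (hp : IsNextAbove v a c p)
    (hv : IsSignedPerm n v) {y : ℤ} (hry : r < y) (hys : y < s) (hyc : -c < v y) :
    IsRowAt (v * signedSwap r (-p)) y (-v y + r - 1) := by
  have hr := h.one_le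
  have hpos := h.pos
  have hac := hp.lt
  have hya := h.map_lt y hry hys
  have hyp : y ≠ p := by rintro rfl; have := hp.map_eq; omega
  have hmap := h.map_of_ne hp (by omega) hry.ne' hyp
  refine ⟨by omega, by omega, by omega, by omega, fun x hx hxy => ?_⟩
  rw [hmap]
  rcases lt_trichotomy x r with hxr | rfl | hrx
  · have := h.lt_map_left x hx hxr
    rcases eq_or_ne x p with rfl | hxp
    · rw [h.map_partner hp hv]
      omega
    · rw [h.map_of_ne hp hx hxr.ne hxp]
      omega
  · rw [h.map_pivot hp hv]
    omega
  · have := h.map_lt x hrx (hxy.trans hys)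
    have := h.increasing x y hrx hxy
    rw [h.map_of_ne hp hx hrx.ne' (by rintro rfl; have := hp.map_eq; omega)]
    omega

theorem isRowAt_of_not_between (h : IsPivot v r s a Λ) (hp : IsNextAbove v a c p)
    (hv : IsSignedPerm n v) {q l : ℤ} (hqr : q ≠ r) (hq : v q < -c ∨ -a < v q)
    (hrow : IsRowAt v q l) : IsRowAt (v * signedSwap r (-p)) q l := by
  have hpos := h.pos
  have hac := hp.lt
  have hneg := hrow.map_neg
  have hqp : q ≠ p := by rintro rfl; have := hp.map_eq; omega
  refine hrow.of_lt_iff (h.map_of_ne hp hrow.one_le hqr hqp) fun x hx hxq => ?_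
  rcases eq_or_ne x r with rfl | hxr
  · rw [h.map_pivot hp hv, h.map_eq]
    omega
  · rcases eq_or_ne x p with rfl | hxp
    · rw [h.map_partner hp hv, hp.map_eq]
      omega
    · rw [h.map_of_ne hp hx hxr hxp]

theorem between_or_not_between (h : IsPivot v r s a Λ) (hp : IsNextAbove v a c p)
    (hv : IsSignedPerm n v) {q : ℤ} (hq : 1 ≤ q) (hqr : q ≠ r) :
    (r < q ∧ q < s ∧ -c < v q ∧ v q < -a) ∨ v q < -c ∨ -a < v q := by
  have hr := h.map_eq
  have hp' := hp.map_eq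
  have hp1 := hp.one_le
  have ha : v q ≠ -a := fun hqa => hqr (v.injective (hqa.trans hr.symm))
  have hc : v q ≠ -c := fun hqc => by
    have := v.injective (a₁ := q) (a₂ := -p) (by rw [hv.1, hp', hqc])
    omega
  have hleft := h.lt_map_left q hq
  have hright := h.lt_map_right q
  omega

theorem lt_of_pos_mul_signedSwap (h : IsPivot v r s a Λ) (hp : IsNextAbove v a c p)
    (hv : IsSignedPerm n v) (i j : ℤ) (hi : 1 ≤ i) (hij : i < j)
    (hj : 0 < (v * signedSwap r (-p)) j) :
    (v * signedSwap r (-p)) i < (v * signedSwap r (-p)) j := by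
  have hpos := h.pos
  have hac := hp.lt
  have hr := h.map_eq
  have hjr : j ≠ r := by
    rintro rfl
    rw [h.map_pivot hp hv] at hj
    omega
  rcases eq_or_ne i r with rfl | hir
  · rw [h.map_pivot hp hv]
    omega
  rcases eq_or_ne j p with rfl | hjp
  · have hlt := h.lt_of_pos i j hi hij (by rw [hp.map_eq]; omega)
    have hle := hp.le_map i hi
    have hne : v i ≠ a := fun hia => by
      have := v.injective (a₁ := i) (a₂ := -r) (by rw [hv.1, hr, hia, neg_neg])
      have := h.one_le
      omega
    rw [hp.map_eq] at hlt
    rw [h.map_partner hp hv, h.map_of_ne hp hi hir hij.ne]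
    omega
  · rw [h.map_of_ne hp (by omega) hjr hjp] at hj ⊢
    have hlt := h.lt_of_pos i j hi hij hj
    rcases eq_or_ne i p with rfl | hip
    · rw [h.map_partner hp hv]
      rw [hp.map_eq] at hlt
      omega
    · rwa [h.map_of_ne hp hi hir hip]

theorem hasShiftedCode (h : IsPivot v r s a Λ) (hp : IsNextAbove v a c p)
    (hv : IsSignedPerm n v) : HasShiftedCode (v * signedSwap r (-p)) Λ where
  lt_of_pos := h.lt_of_pos_mul_signedSwap hp hv
  exists_row q hq hneg := by
    have hac := hp.lt
    rcases eq_or_ne q r with rfl | hqr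
    · have hmem := h.add_mem hp hv (b := c - 1) (by omega) (by omega)
      exact ⟨c + q - 1, by rwa [show c + q - 1 = c - 1 + q by omega], h.isRowAt_pivot hp hv⟩
    have hqp : q ≠ p := by
      rintro rfl
      rw [h.map_partner hp hv] at hneg
      exact hneg.not_gt h.pos
    rw [h.map_of_ne hp hq hqr hqp] at hneg
    rcases h.between_or_not_between hp hv hq hqr with ⟨hrq, hqs, hqc, hqa⟩ | hout
    · have hmem := h.add_mem hp hv (b := -v q - 1) (by omega) (by omega)
      exact ⟨-v q + r - 1, by rwa [show -v q + r - 1 = -v q - 1 + r by omega],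
        h.isRowAt_of_between hp hv hrq hqs hqc⟩
    · obtain ⟨l, hl, hrow⟩ := h.exists_row q hq hqr hneg
      exact ⟨l, hl, h.isRowAt_of_not_between hp hv hqr hout hrow⟩
  exists_position l hl := by
    have hac := hp.lt
    have hvalue (b : ℤ) (hab : a < b) (hbc : b ≤ c) :
        ∃ y, IsRowAt (v * signedSwap r (-p)) y (b + r - 1) := by
      rcases hbc.eq_or_lt with rfl | hbc
      · exact ⟨r, h.isRowAt_pivot hp hv⟩
      · obtain ⟨y, hry, hys, hy⟩ := h.exists_map_eq_neg hp hv hab hbc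
        have := h.isRowAt_of_between hp hv hry hys (by omega)
        rw [hy, neg_neg] at this
        exact ⟨y, this⟩
    rcases h.exists_position l hl with rfl | ⟨q, hqr, hrow⟩
    · rw [show a + r = a + 1 + r - 1 by omega]
      exact hvalue (a + 1) (by omega) (by omega)
    · rcases h.between_or_not_between hp hv hrow.one_le hqr with ⟨hrq, hqs, hqc, hqa⟩ | hout
      · have := h.add_map_eq_of_between hrq hqs hrow
        rw [show l = -v q + 1 + r - 1 by omega]
        exact hvalue (-v q + 1) (by omega) (by omega)
      · exact ⟨q, h.isRowAt_of_not_between hp hv hqr hout hrow⟩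

theorem increasing_mul_signedSwap (h : IsPivot v r s a Λ) (hp : IsNextAbove v a c p)
    (hv : IsSignedPerm n v) (x y : ℤ) (hrx : r < x) (hxy : x < y) :
    (v * signedSwap r (-p)) x < (v * signedSwap r (-p)) y := by
  have hr := h.one_le
  rcases eq_or_ne y p with rfl | hyp
  · exact h.lt_of_pos_mul_signedSwap hp hv x y (by omega) hxy
      (by rw [h.map_partner hp hv]; exact h.pos)
  rw [h.map_of_ne hp (by omega) (by omega) hyp]
  have hlt := h.increasing x y hrx hxy
  rcases eq_or_ne x p with rfl | hxp
  · rw [hp.map_eq] at hlt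
    rw [h.map_partner hp hv]
    exact hp.lt.trans hlt
  · rwa [h.map_of_ne hp (by omega) hrx.ne' hxp]

theorem map_pivot_lt (h : IsPivot v r s a Λ) (hp : IsNextAbove v a c p)
    (hv : IsSignedPerm n v) (x : ℤ) (hsx : s ≤ x) :
    (v * signedSwap r (-p)) r < (v * signedSwap r (-p)) x := by
  have hr := h.one_le
  have hrs := h.lt
  have hpos := h.pos
  have hac := hp.lt
  have hright := h.lt_map_right x hsx
  rw [h.map_pivot hp hv]
  rcases eq_or_ne x p with rfl | hxp
  · rw [h.map_partner hp hv]
    omega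
  · rw [h.map_of_ne hp (by omega) (by omega) hxp]
    omega

theorem isBruhatCover (h : IsPivot v r s a Λ) (hv : IsSignedPerm n v) : IsBruhatCover v r s := by
  have hr := h.one_le
  have hrs := h.lt
  have hlt := h.lt_map_right s le_rfl
  have hN := hv.mono (N := n + s.natAbs) (by omega)
  refine hN.isBruhatCover (by omega) (by omega) (by rw [abs_le]; omega) (by rw [abs_le]; omega)
    hrs (h.map_eq ▸ hlt) fun q hrq hqs hlt => ?_
  rw [h.map_eq] at hlt
  exact absurd (h.map_lt q hrq hqs) hlt.not_gt

theorem isBruhatCover_neg (h : IsPivot v r s a Λ) (hp : IsNextAbove v a c p)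
    (hv : IsSignedPerm n v) : IsBruhatCover v r (-p) := by
  have hr := h.one_le
  have hpos := h.pos
  have hac := hp.lt
  have hp1 := hp.one_le
  have hmap : v (-p) = -c := by rw [hv.1, hp.map_eq]
  have hN := hv.mono (N := n + r.natAbs + p.natAbs) (by omega)
  rw [isBruhatCover_comm (by omega) (by omega)]
  refine hN.isBruhatCover (by omega) (by omega) (by rw [abs_le]; omega) (by rw [abs_le]; omega)
    (by omega) (by rw [hmap, h.map_eq]; omega) fun q hpq hqr hlt => ?_
  rw [h.map_eq]
  rcases lt_trichotomy q 0 with hq | rfl | hq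
  · have hle := hp.le_map (-q) (by omega)
    have hlt' := h.lt_of_pos (-q) p (by omega) (by omega) (by rw [hp.map_eq]; omega)
    rw [hv.1, hp.map_eq] at *
    omega
  · rw [hv.map_zero]
    omega
  · exact (h.lt_map_left q (by omega) hqr).le

theorem not_isBruhatCover_of_pos (h : IsPivot v r s a Λ) (hv : IsSignedPerm n v) {x : ℤ}
    (hx : 1 ≤ x) (hxs : x ≠ s) : ¬ IsBruhatCover v r x := by
  intro hcov
  have hr := h.one_le
  have hrs := h.lt
  have hmap := h.map_eq
  have hs := h.lt_map_right s le_rfl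
  have hleft := h.lt_map_left x hx
  have hbtw := h.map_lt x
  rcases lt_trichotomy x r with hxr | rfl | hrx
  · rw [isBruhatCover_comm (by omega) (by omega)] at hcov
    have := hv.lt_of_isBruhatCover (by omega) (by omega) hxr hcov
    omega
  · rw [IsBruhatCover, signedSwap_self (by omega), mul_one] at hcov
    omega
  · have hlt := hv.lt_of_isBruhatCover (by omega) (by omega) hrx hcov
    have hsx : s < x := by omega
    exact hv.not_isBruhatCover_of_between (by omega) (by omega) (by omega) hrs hsx (by omega)
      (by omega) (by omega) (by omega) (h.increasing s x hrs hsx) hcov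

theorem not_isBruhatCover_of_neg (h : IsPivot v r s a Λ) (hp : IsNextAbove v a c p)
    (hv : IsSignedPerm n v) {x : ℤ} (hx : x ≤ -1) (hxp : x ≠ -p) : ¬ IsBruhatCover v r x := by
  intro hcov
  have hr := h.one_le
  have hpos := h.pos
  have hac := hp.lt
  have hp1 := hp.one_le
  have hmap := h.map_eq
  have hneg := hv.1 x
  have hneg' : v (-p) = -c := by rw [hv.1, hp.map_eq]
  rw [isBruhatCover_comm (by omega) (by omega)] at hcov
  have hlt := hv.lt_of_isBruhatCover (by omega) (by omega) (by omega) hcov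
  have hle := hp.le_map (-x) (by omega) (by omega)
  have hpx : p < -x := by
    by_contra hxp'
    have := h.lt_of_pos (-x) p (by omega) (by omega) (by rw [hp.map_eq]; omega)
    rw [hp.map_eq] at this
    omega
  have := h.lt_of_pos p (-x) hp1 hpx (by omega)
  rw [hp.map_eq] at this
  have hxr : x ≠ -r := by rintro rfl; have := hv.1 r; omega
  have hpr := h.ne_right hp
  exact hv.not_isBruhatCover_of_between (q := -p) (by omega) (by omega) (by omega) (by omega)
    (by omega) (by omega) (by omega) (by omega) (by omega) (by omega) hcov

theorem le_succ (h : IsPivot v r s a Λ) (hv : IsSignedPerm n v) : r ≤ n ∧ s ≤ n + 1 := by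
  have hpos := h.pos
  have hmap := h.map_eq
  have hfix (x : ℤ) (hx : n < x) : v x = x := hv.2 x (hx.trans_le (le_abs_self x))
  have hrn : r ≤ n := by
    by_contra hr
    have := hfix r (by omega)
    omega
  refine ⟨hrn, ?_⟩
  by_contra hs
  have := h.map_lt (n + 1) (by omega) (by omega)
  rw [hfix _ (by omega)] at this
  omega

theorem exists_isNextAbove (h : IsPivot v r s a Λ) (hv : IsSignedPerm n v) :
    ∃ c p, IsNextAbove v a c p ∧ p ≤ n + 1 := by
  have hr := h.one_le
  have hrn := (h.le_succ hv).1
  have han : a ≤ n := by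
    have := (abs_le.1 (hv.abs_apply_le (i := r) (by rw [abs_le]; omega))).1
    rw [h.map_eq] at this
    omega
  have hfix : v⁻¹ (n + 1) = n + 1 := hv.inv.2 _ (by rw [lt_abs]; omega)
  obtain ⟨c, ⟨hac, hpos⟩, hmin⟩ := Int.exists_least_of_bdd
    (P := fun c => a < c ∧ 0 < v⁻¹ c) ⟨a, fun c hc => hc.1.le⟩
    ⟨n + 1, by omega, by rw [hfix]; omega⟩
  refine ⟨c, v⁻¹ c, ⟨hpos, Equiv.Perm.eq_inv_iff_eq.1 rfl, hac, fun x hx hax => ?_⟩, ?_⟩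
  · exact hmin _ ⟨hax, by rw [Equiv.Perm.inv_eq_iff_eq.2 rfl]; omega⟩
  · have hcn := hmin (n + 1) ⟨by omega, by rw [hfix]; omega⟩
    have := h.pos
    have hinv := (hv.mono n.le_succ).inv.abs_apply_le (i := c) (by rw [abs_le]; push_cast; omega)
    exact_mod_cast (abs_le.1 hinv).2

theorem bruhatCovers_eq (h : IsPivot v r s a Λ) (hp : IsNextAbove v a c p)
    (hv : IsSignedPerm n v) (hpn : p ≤ n + 1) : bruhatCovers n v r = {s, -p} := by
  have hr := h.one_le
  have hrs := h.lt
  have hsn := (h.le_succ hv).2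
  have hp1 := hp.one_le
  ext x
  rw [bruhatCovers, Finset.mem_filter, Finset.mem_Icc, Finset.mem_insert, Finset.mem_singleton]
  constructor
  · rintro ⟨-, hx, hcov⟩
    by_contra! hne
    rcases lt_or_gt_of_ne hx with hneg | hpos
    · exact h.not_isBruhatCover_of_neg hp hv (by omega) hne.2 hcov
    · exact h.not_isBruhatCover_of_pos hv (by omega) hne.1 hcov
  · rintro (rfl | rfl)
    · exact ⟨by omega, by omega, h.isBruhatCover hv⟩
    · exact ⟨by omega, by omega, h.isBruhatCover_neg hp hv⟩

/-- Only two reflections contribute to the transition equation at a pivot, with opposite signs. -/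
theorem redCount_eq (h : IsPivot v r s a Λ) (hp : IsNextAbove v a c p) (hv : IsSignedPerm n v)
    (hpn : p ≤ n + 1) :
    redCount (v * signedSwap r s) = redCount (v * signedSwap r (-p)) := by
  have hr := h.one_le
  have hrs := h.lt
  have hp1 := hp.one_le
  have hrn := (h.le_succ hv).1
  have htrans := hv.transitionSum_eq_zero (r := r) (by omega) (by rw [abs_le]; omega)
  rw [transitionSum, h.bruhatCovers_eq hp hv hpn, Finset.sum_pair (by omega),
    Int.sign_eq_one_of_pos (by omega), Int.sign_eq_neg_one_of_neg (by omega)] at htrans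
  omega

end IsPivot

section Reduction

variable {w : Equiv.Perm ℤ} {Λ : Set ℤ}

theorem HasShiftedCode.exists_of_isLastDescent {n : ℕ} (hc : HasShiftedCode w Λ)
    (hw : IsSignedPerm n w) {r s : ℤ} (h : IsLastDescent w r s) :
    ∃ N u, IsSignedPerm N u ∧ HasShiftedCode u Λ ∧ (∀ x y, r < x → x < y → u x < u y) ∧
      (∀ x, s ≤ x → u r < u x) ∧ redCount w = redCount u := by
  have hr := h.one_le
  have hrs := h.lt
  have hr0 : r ≠ 0 := by omega
  have hs0 : s ≠ 0 := by omega
  obtain ⟨N, -, hv⟩ := hw.exists_mul_signedSwap hr0 hs0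
  have hpivot := h.isPivot hw hc
  obtain ⟨c, p, hp, hpn⟩ := hpivot.exists_isNextAbove hv
  have hp1 := hp.one_le
  obtain ⟨M, -, hu⟩ := hv.exists_mul_signedSwap hr0 (show -p ≠ 0 by omega)
  refine ⟨M, _, hu, hpivot.hasShiftedCode hp hv, hpivot.increasing_mul_signedSwap hp hv,
    hpivot.map_pivot_lt hp hv, ?_⟩
  rw [← hpivot.redCount_eq hp hv hpn, mul_signedSwap_mul_signedSwap hr0 hs0]

/-- The descents at position `r` are removed from right to left. -/
theorem HasShiftedCode.exists_increasing_from {n : ℕ} (hc : HasShiftedCode w Λ)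
    (hw : IsSignedPerm n w) {r : ℤ} (hr : 1 ≤ r) (hinc : ∀ x y, r < x → x < y → w x < w y)
    (t : ℕ) (hlast : ∀ x, r + t < x → w r < w x) :
    ∃ N u, IsSignedPerm N u ∧ HasShiftedCode u Λ ∧ (∀ x y, r ≤ x → x < y → u x < u y) ∧
      redCount w = redCount u := by
  induction t generalizing n w with
  | zero =>
    refine ⟨n, w, hw, hc, fun x y hrx hxy => ?_, rfl⟩
    rcases hrx.eq_or_lt with rfl | hrx
    · exact hlast y (by simpa using hxy)
    · exact hinc x y hrx hxy
  | succ t ih =>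
    push_cast at hlast
    rcases lt_or_ge (w (r + (t + 1))) (w r) with hgt | hle
    · obtain ⟨N, u, hu, hcu, hincu, hlastu, hred⟩ := hc.exists_of_isLastDescent hw
        ⟨hr, by omega, hgt, hinc, fun x hx => hlast x hx⟩
      rw [hred]
      exact ih hcu hu hincu fun x hx => hlastu x (by omega)
    · refine ih hc hw hinc fun x hx => ?_
      rcases (show r + (t + 1) ≤ x by omega).eq_or_lt with rfl | hx
      · exact hle.lt_of_ne fun h => by have := w.injective h; omega
      · exact hlast x hx

theorem HasShiftedCode.exists_increasing {n : ℕ} (hc : HasShiftedCode w Λ)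
    (hw : IsSignedPerm n w) (r : ℕ) (hinc : ∀ x y, (r : ℤ) < x → x < y → w x < w y) :
    ∃ N u, IsSignedPerm N u ∧ HasShiftedCode u Λ ∧ (∀ x y, 0 < x → x < y → u x < u y) ∧
      redCount w = redCount u := by
  induction r generalizing n w with
  | zero => exact ⟨n, w, hw, hc, hinc, rfl⟩
  | succ r ih =>
    push_cast at hinc
    obtain ⟨N, u, hu, hcu, hincu, hred⟩ := hc.exists_increasing_from hw (r := r + 1) (by omega)
      hinc (n + (w (r + 1)).natAbs) fun x hx => by
        rw [hw.2 x (by rw [lt_abs]; omega)]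
        omega
    rw [hred]
    exact ih hcu hu hincu

theorem HasShiftedCode.exists_map_eq_neg_iff (hc : HasShiftedCode w Λ)
    (hinc : ∀ x y, 0 < x → x < y → w x < w y) (l : ℤ) :
    (∃ q, 1 ≤ q ∧ w q < 0 ∧ w q = -l) ↔ l ∈ Λ := by
  have hrow {q m : ℤ} (h : IsRowAt w q m) : w q = -m := by
    have hnonneg := h.nonneg
    have hlt := h.lt
    by_contra hne
    exact lt_asymm ((h.lt_iff (m + w q) (by omega) hlt).2 le_rfl) (hinc _ q (by omega) hlt)
  constructor
  · rintro ⟨q, hq, hneg, hl⟩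
    obtain ⟨m, hm, h⟩ := hc.exists_row q hq hneg
    rwa [show l = m by have := hrow h; omega]
  · intro hl
    obtain ⟨q, h⟩ := hc.exists_position l hl
    exact ⟨q, h.one_le, h.map_neg, hrow h⟩

end Reduction

/-! ### Standard fillings -/

section StandardFilling

variable {α : Type*} {R : α → α → Prop} {D : Set α} {b : α} {N : ℕ} {B : α → ℕ}

/-- A filling of the cells `D` with `1, …, N`, extended by `0` off `D`, whose entries increase
along the relation `R`. -/
structure IsStandardFilling (R : α → α → Prop) (D : Set α) (N : ℕ) (B : α → ℕ) : Prop where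
  bijOn : Set.BijOn B D (Set.Icc 1 N)
  eq_zero : ∀ p, p ∉ D → B p = 0
  lt : ∀ p ∈ D, ∀ q ∈ D, R p q → B p < B q

/-- A cell of `D` with no cell of `D` after it, that is, a possible position of the largest entry
of a standard filling. -/
def IsCorner (R : α → α → Prop) (D : Set α) (b : α) : Prop :=
  b ∈ D ∧ ∀ q ∈ D, ¬R b q

namespace IsStandardFilling

theorem le (h : IsStandardFilling R D N B) (p : α) : B p ≤ N := by
  by_cases hp : p ∈ D
  · exact (h.bijOn.mapsTo hp).2
  · exact (h.eq_zero p hp).trans_le (Nat.zero_le N)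

theorem isCorner (h : IsStandardFilling R D (N + 1) B) (hb : B b = N + 1) : IsCorner R D b := by
  have hbD : b ∈ D := by
    by_contra hbD
    exact Nat.succ_ne_zero N (hb.symm.trans (h.eq_zero b hbD))
  refine ⟨hbD, fun q hq hbq => ?_⟩
  have hlt := h.lt b hbD q hq hbq
  have hle := h.le q
  omega

theorem exists_eq (h : IsStandardFilling R D (N + 1) B) : ∃ b, B b = N + 1 :=
  let ⟨b, _, hb⟩ := h.bijOn.surjOn (Set.right_mem_Icc.2 (Nat.le_add_left 1 N))
  ⟨b, hb⟩

variable [DecidableEq α]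

theorem update_corner (hb : IsCorner R D b) (h : IsStandardFilling R (D \ {b}) N B) :
    IsStandardFilling R D (N + 1) (Function.update B b (N + 1)) := by
  have hself : Function.update B b (N + 1) b = N + 1 := Function.update_self ..
  have hof : ∀ {p}, p ≠ b → Function.update B b (N + 1) p = B p :=
    fun hp => Function.update_of_ne hp ..
  refine ⟨?_, fun p hp => ?_, fun p hp q hq hpq => ?_⟩
  · have hbij : Set.BijOn (Function.update B b (N + 1)) (D \ {b}) (Set.Icc 1 N) :=
      h.bijOn.congr fun p hp => (hof hp.2).symm
    have hins := hbij.insert (a := b) (by simp)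
    rw [hself, Set.insert_sdiff_singleton, Set.insert_eq_of_mem hb.1] at hins
    convert hins using 1
    ext x
    simp only [Set.mem_Icc, Set.mem_insert_iff]
    omega
  · have hpb : p ≠ b := fun hpb => hp (hpb ▸ hb.1)
    rw [hof hpb, h.eq_zero p fun hpD => hp hpD.1]
  · have hpb : p ≠ b := fun hpb => hb.2 q hq (hpb ▸ hpq)
    rw [hof hpb]
    obtain rfl | hqb := eq_or_ne q b
    · rw [hself]
      exact Nat.lt_succ_of_le (h.le p)
    · rw [hof hqb]
      exact h.lt p ⟨hp, hpb⟩ q ⟨hq, hqb⟩ hpq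

theorem update_zero (h : IsStandardFilling R D (N + 1) B) (hb : B b = N + 1) :
    IsStandardFilling R (D \ {b}) N (Function.update B b 0) := by
  have hof : ∀ {p}, p ≠ b → Function.update B b 0 p = B p := fun hp => Function.update_of_ne hp ..
  refine ⟨?_, fun p hp => ?_, fun p hp q hq hpq => ?_⟩
  · have hbij := h.bijOn.sdiff_singleton (h.isCorner hb).1
    rw [hb] at hbij
    convert hbij.congr fun p hp => (hof hp.2).symm using 1
    ext x
    simp only [Set.mem_Icc, Set.mem_sdiff, Set.mem_singleton_iff]
    omega
  · obtain rfl | hpb := eq_or_ne p b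
    · exact Function.update_self ..
    · rw [hof hpb, h.eq_zero p fun hpD => hp ⟨hpD, hpb⟩]
  · rw [hof hp.2, hof hq.2]
    exact h.lt p hp.1 q hq.1 hpq

end IsStandardFilling

theorem finite_isStandardFilling (R : α → α → Prop) (D : Set α) (N : ℕ) :
    Finite {B // IsStandardFilling R D N B} := by
  by_cases hD : D.Finite
  · have := hD.to_subtype
    refine Finite.of_injective (β := D → Fin (N + 1))
      (fun B p => ⟨B.1 p, Nat.lt_succ_of_le (B.2.le p)⟩)
      fun B C hBC => Subtype.ext (funext fun p => ?_)
    by_cases hp : p ∈ D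
    · exact congrArg Fin.val (congrFun hBC ⟨p, hp⟩)
    · rw [B.2.eq_zero p hp, C.2.eq_zero p hp]
  · have : IsEmpty {B // IsStandardFilling R D N B} :=
      ⟨fun B => hD (B.2.bijOn.finite_iff_finite.2 (Set.finite_Icc 1 N))⟩
    infer_instance

section Recursion

variable (R : α → α → Prop) (D : Set α) (N : ℕ)

/-- Inserting the entry `N + 1` at a corner into a standard filling of the other cells. -/
def insertLargest [DecidableEq α]
    (B : Σ b : {b // IsCorner R D b}, {B // IsStandardFilling R (D \ {b.1}) N B}) :
    {B // IsStandardFilling R D (N + 1) B} :=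
  ⟨_, B.2.2.update_corner B.1.2⟩

theorem insertLargest_bijective [DecidableEq α] : Function.Bijective (insertLargest R D N) := by
  constructor
  · rintro ⟨⟨b, hb⟩, B, hB⟩ ⟨⟨c, hc⟩, C, hC⟩ hBC
    have heq : Function.update B b (N + 1) = Function.update C c (N + 1) := congrArg Subtype.val hBC
    obtain rfl : b = c := by
      by_contra hbc
      have hval := congrFun heq b
      rw [Function.update_self, Function.update_of_ne hbc] at hval
      have hle := hC.le b
      omega
    have hBC : B = C := by
      have h0 := congrArg (Function.update · b 0) heq
      simp only [Function.update_idem] at h0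
      have hB0 : B b = 0 := hB.eq_zero b fun h => h.2 rfl
      have hC0 : C b = 0 := hC.eq_zero b fun h => h.2 rfl
      rwa [← hB0, Function.update_eq_self, hB0, ← hC0, Function.update_eq_self] at h0
    subst hBC
    rfl
  · rintro ⟨B, hB⟩
    obtain ⟨b, hb⟩ := hB.exists_eq
    refine ⟨⟨⟨b, hB.isCorner hb⟩, ⟨_, hB.update_zero hb⟩⟩, Subtype.ext ?_⟩
    simp only [insertLargest, Function.update_idem]
    rw [← hb, Function.update_eq_self]

theorem card_isStandardFilling_succ {s : Finset α} (hs : ∀ b, b ∈ s ↔ IsCorner R D b) :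
    Nat.card {B // IsStandardFilling R D (N + 1) B} =
      ∑ b ∈ s, Nat.card {B // IsStandardFilling R (D \ {b}) N B} := by
  classical
  have := fun b => finite_isStandardFilling R (D \ {b}) N
  have : Fintype {b // IsCorner R D b} := Fintype.subtype s hs
  rw [← Nat.card_eq_of_bijective _ (insertLargest_bijective R D N), Nat.card_sigma]
  exact (Finset.sum_subtype s hs fun b => Nat.card {B // IsStandardFilling R (D \ {b}) N B}).symm

end Recursion

theorem card_isStandardFilling_empty (R : α → α → Prop) :
    Nat.card {B // IsStandardFilling R ∅ 0 B} = 1 := by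
  have hzero : IsStandardFilling R ∅ 0 (0 : α → ℕ) := ⟨by simp, fun _ _ => rfl, by simp⟩
  refine Nat.card_eq_one_iff_unique.2 ⟨⟨fun B C => Subtype.ext (funext fun p => ?_)⟩, ⟨_, hzero⟩⟩
  rw [B.2.eq_zero p (Set.notMem_empty p), C.2.eq_zero p (Set.notMem_empty p)]

end StandardFilling

/-! ### Shifted shapes -/

section Shape

variable {d i j : ℕ} {lam : ℕ → ℕ}

/-- Strict partitions with at most `d` parts, padded with zeros: the shapes that occur when boxes
are removed from a strict partition. -/
def IsWeaklyStrict (d : ℕ) (lam : ℕ → ℕ) : Prop :=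
  ∀ i, 1 ≤ i → i < d → lam (i + 1) < lam i ∨ lam (i + 1) = 0

/-- The last box of row `i` can be removed, leaving a weakly strict shape. -/
def IsRemovable (d : ℕ) (lam : ℕ → ℕ) (i : ℕ) : Prop :=
  1 ≤ lam i ∧ (i < d → lam (i + 1) + 1 < lam i ∨ lam (i + 1) = 0)

instance (d : ℕ) (lam : ℕ → ℕ) : DecidablePred (IsRemovable d lam) :=
  fun _ => inferInstanceAs (Decidable (_ ∧ _))

/-- The rows whose last box can be removed. -/
def removableRows (d : ℕ) (lam : ℕ → ℕ) : Finset ℕ :=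
  (Finset.Icc 1 d).filter (IsRemovable d lam)

/-- The shape obtained by removing the last box of row `i`. -/
def removeBox (lam : ℕ → ℕ) (i : ℕ) : ℕ → ℕ :=
  Function.update lam i (lam i - 1)

/-- The last box of row `i`. -/
def rowEnd (d : ℕ) (lam : ℕ → ℕ) (i : ℕ) : ℤ × ℤ :=
  (i, lam i + i - d - 1)

theorem mem_removableRows : i ∈ removableRows d lam ↔ (1 ≤ i ∧ i ≤ d) ∧ IsRemovable d lam i := by
  rw [removableRows, Finset.mem_filter, Finset.mem_Icc]

theorem removeBox_self : removeBox lam i i = lam i - 1 :=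
  Function.update_self ..

theorem removeBox_of_ne (h : j ≠ i) : removeBox lam i j = lam j :=
  Function.update_of_ne h ..

theorem IsStrictPartition.isWeaklyStrict (h : IsStrictPartition d lam) : IsWeaklyStrict d lam :=
  fun i hi hid => .inl (h.1 i hi hid)

namespace IsWeaklyStrict

theorem removeBox (h : IsWeaklyStrict d lam) (hi : IsRemovable d lam i) :
    IsWeaklyStrict d (removeBox lam i) := by
  intro j hj hjd
  have hlt := h j hj hjd
  obtain ⟨-, hi⟩ := hi
  obtain rfl | hji := eq_or_ne j i
  · rw [removeBox_self, removeBox_of_ne (by omega)]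
    have := hi hjd
    omega
  · rw [removeBox_of_ne hji]
    obtain rfl | hji' := eq_or_ne (j + 1) i
    · rw [removeBox_self]
      omega
    · rwa [removeBox_of_ne hji']

theorem add_le (h : IsWeaklyStrict d lam) (hi : 1 ≤ i) (hij : i ≤ j) (hjd : j ≤ d)
    (hj : 1 ≤ lam j) : lam j + j ≤ lam i + i := by
  induction j, hij using Nat.le_induction with
  | base => rfl
  | succ j hij ih =>
    have hlt := h j (by omega) (by omega)
    have := ih (by omega) (by omega)
    omega

theorem lt (h : IsWeaklyStrict d lam) (hi : 1 ≤ i) (hij : i < j) (hjd : j ≤ d)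
    (hj : 1 ≤ lam j) : lam j < lam i := by
  have := h.add_le hi hij.le hjd hj
  omega

theorem eq_of_eq (h : IsWeaklyStrict d lam) (hi : 1 ≤ i) (hid : i ≤ d) (hj : 1 ≤ j) (hjd : j ≤ d)
    (hpos : 1 ≤ lam i) (heq : lam i = lam j) : i = j := by
  rcases lt_trichotomy i j with hij | hij | hij
  · have := h.lt hi hij hjd (heq ▸ hpos)
    omega
  · exact hij
  · have := h.lt hj hij hid hpos
    omega

end IsWeaklyStrict

theorem sizeP_removeBox_add_one (hi : 1 ≤ i) (hid : i ≤ d) (hpos : 1 ≤ lam i) :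
    sizeP d (removeBox lam i) + 1 = sizeP d lam := by
  have hmem : i ∈ Finset.Icc 1 d := Finset.mem_Icc.2 ⟨hi, hid⟩
  have hsum := Finset.sum_update_of_mem hmem lam (lam i - 1)
  have herase := Finset.add_sum_erase (Finset.Icc 1 d) lam hmem
  rw [Finset.erase_eq] at herase
  simp only [sizeP, removeBox]
  omega

theorem sizeP_eq_zero_iff : sizeP d lam = 0 ↔ ∀ i, 1 ≤ i → i ≤ d → lam i = 0 := by
  simp [sizeP, Finset.sum_eq_zero_iff]

theorem mem_diagram {c : ℤ} : ((i : ℤ), c) ∈ Diagram d lam ↔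
    1 ≤ i ∧ i ≤ d ∧ (i : ℤ) - d ≤ c ∧ c + d + 1 ≤ lam i + i := by
  simp [Diagram]

theorem exists_eq_of_mem_diagram {p : ℤ × ℤ} (h : p ∈ Diagram d lam) :
    ∃ (i : ℕ) (c : ℤ), p = ((i : ℤ), c) :=
  ⟨p.1.toNat, p.2, Prod.ext (Int.toNat_of_nonneg (zero_le_one.trans h.1)).symm rfl⟩

theorem diagram_eq_empty (h : sizeP d lam = 0) : Diagram d lam = ∅ := by
  refine Set.eq_empty_of_forall_notMem fun p hp => ?_
  obtain ⟨i, c, rfl⟩ := exists_eq_of_mem_diagram hp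
  have hmem := mem_diagram.1 hp
  have := sizeP_eq_zero_iff.1 h i hmem.1 hmem.2.1
  omega

theorem diagram_removeBox (hpos : 1 ≤ lam i) :
    Diagram d (removeBox lam i) = Diagram d lam \ {rowEnd d lam i} := by
  have key : ∀ (j : ℕ) (c : ℤ), ((j : ℤ), c) ∈ Diagram d (removeBox lam i) ↔
      ((j : ℤ), c) ∈ Diagram d lam ∧ ((j : ℤ), c) ≠ rowEnd d lam i := by
    intro j c
    rw [mem_diagram, mem_diagram, rowEnd, Ne, Prod.mk.injEq]
    obtain rfl | hji := eq_or_ne j i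
    · rw [removeBox_self]
      omega
    · rw [removeBox_of_ne hji]
      omega
  ext p
  constructor
  · intro hp
    obtain ⟨j, c, rfl⟩ := exists_eq_of_mem_diagram hp
    exact (key j c).1 hp
  · intro hp
    obtain ⟨j, c, rfl⟩ := exists_eq_of_mem_diagram hp.1
    exact (key j c).2 hp

/-! ### Standard Young tableaux -/

/-- `p` lies to the left of `q` in the same row, or above `q` in the same column. -/
def IsLeftOrAbove (p q : ℤ × ℤ) : Prop :=
  (p.1 = q.1 ∧ p.2 < q.2) ∨ (p.2 = q.2 ∧ p.1 < q.1)

theorem isSYT_iff_isStandardFilling {B : ℤ × ℤ → ℕ} :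
    IsSYT d lam B ↔ IsStandardFilling IsLeftOrAbove (Diagram d lam) (sizeP d lam) B :=
  ⟨fun h => ⟨h.1.1, h.1.2, fun p hp q hq hpq => hpq.elim (h.2 p hp q hq).1 (h.2 p hp q hq).2⟩,
    fun h => ⟨⟨h.bijOn, h.eq_zero⟩, fun p hp q hq =>
      ⟨fun hpq => h.lt p hp q hq (.inl hpq), fun hpq => h.lt p hp q hq (.inr hpq)⟩⟩⟩

theorem isCorner_rowEnd (h : IsWeaklyStrict d lam) (hi : i ∈ removableRows d lam) :
    IsCorner IsLeftOrAbove (Diagram d lam) (rowEnd d lam i) := by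
  obtain ⟨⟨hi1, hid⟩, hpos, hrow⟩ := mem_removableRows.1 hi
  refine ⟨mem_diagram.2 (by omega), fun q hq => ?_⟩
  obtain ⟨j, c, rfl⟩ := exists_eq_of_mem_diagram hq
  have hmem := mem_diagram.1 hq
  rintro (⟨hrow', hcol⟩ | ⟨hcol, hrow'⟩) <;>
    simp only [rowEnd, Nat.cast_inj, Nat.cast_lt] at hrow' hcol
  · subst hrow'
    omega
  · have hle := h.add_le (i := i + 1) (by omega) hrow' hmem.2.1 (by omega)
    have := hrow (by omega)
    omega

theorem exists_rowEnd_eq (h : IsWeaklyStrict d lam) {p : ℤ × ℤ}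
    (hp : IsCorner IsLeftOrAbove (Diagram d lam) p) :
    ∃ i ∈ removableRows d lam, rowEnd d lam i = p := by
  obtain ⟨hpD, hmax⟩ := hp
  obtain ⟨i, c, rfl⟩ := exists_eq_of_mem_diagram hpD
  have hmem := mem_diagram.1 hpD
  have hc : c = lam i + i - d - 1 := by
    by_contra hc
    exact hmax (i, c + 1) (mem_diagram.2 (by omega)) (.inl ⟨rfl, lt_add_one c⟩)
  refine ⟨i, mem_removableRows.2 ⟨⟨hmem.1, hmem.2.1⟩, by omega, fun hid => ?_⟩, by rw [rowEnd, hc]⟩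
  by_contra hrow
  have hlt := h i hmem.1 hid
  refine hmax ((i + 1 : ℕ), c) (mem_diagram.2 (by omega)) (.inr ⟨rfl, ?_⟩)
  exact Nat.cast_lt.2 (Nat.lt_succ_self i)

theorem card_isSYT_of_sizeP_eq_zero (hsize : sizeP d lam = 0) :
    Nat.card {B // IsSYT d lam B} = 1 := by
  simp only [isSYT_iff_isStandardFilling, diagram_eq_empty hsize, hsize]
  exact card_isStandardFilling_empty _

theorem card_isSYT_eq_sum (h : IsWeaklyStrict d lam) (hsize : sizeP d lam ≠ 0) :
    Nat.card {B // IsSYT d lam B} =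
      ∑ i ∈ removableRows d lam, Nat.card {B // IsSYT d (removeBox lam i) B} := by
  obtain ⟨N, hN⟩ := Nat.exists_eq_succ_of_ne_zero hsize
  have hcorner : ∀ b, b ∈ (removableRows d lam).image (rowEnd d lam) ↔
      IsCorner IsLeftOrAbove (Diagram d lam) b := fun b => by
    rw [Finset.mem_image]
    constructor
    · rintro ⟨i, hi, rfl⟩
      exact isCorner_rowEnd h hi
    · exact exists_rowEnd_eq h
  simp only [isSYT_iff_isStandardFilling, hN]
  rw [card_isStandardFilling_succ _ _ _ hcorner,
    Finset.sum_image fun i _ j _ hij => Nat.cast_injective (congrArg Prod.fst hij)]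
  refine Finset.sum_congr rfl fun i hi => ?_
  obtain ⟨⟨hi1, hid⟩, hpos, -⟩ := mem_removableRows.1 hi
  have hsize' : sizeP d (removeBox lam i) = N := by
    have := sizeP_removeBox_add_one hi1 hid hpos
    omega
  rw [diagram_removeBox hpos, hsize']

end Shape

/-! ### Grassmannian signed permutations -/

section Grassmannian

variable {n d i k : ℕ} {lam : ℕ → ℕ} {w : Equiv.Perm ℤ}

/-- The set of row lengths of a shape with `d` rows. -/
def parts (d : ℕ) (lam : ℕ → ℕ) : Set ℤ :=
  {l | ∃ i, 1 ≤ i ∧ i ≤ d ∧ (lam i : ℤ) = l}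

theorem mem_parts_removeBox (h : IsWeaklyStrict d lam) (hi : i ∈ removableRows d lam) {a : ℤ} :
    a ∈ parts d (removeBox lam i) ↔ a = lam i - 1 ∨ a ∈ parts d lam ∧ a ≠ lam i := by
  obtain ⟨⟨hi1, hid⟩, hpos, -⟩ := mem_removableRows.1 hi
  constructor
  · rintro ⟨j, hj, hjd, rfl⟩
    obtain rfl | hji := eq_or_ne j i
    · rw [removeBox_self]
      omega
    · rw [removeBox_of_ne hji]
      refine .inr ⟨⟨j, hj, hjd, rfl⟩, fun heq => hji ?_⟩
      exact (h.eq_of_eq hi1 hid hj hjd hpos (Nat.cast_injective heq).symm).symm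
  · rintro (rfl | ⟨⟨j, hj, hjd, rfl⟩, hne⟩)
    · exact ⟨i, hi1, hid, by rw [removeBox_self]; omega⟩
    · have hji : j ≠ i := fun hji => hne (hji ▸ rfl)
      exact ⟨j, hj, hjd, by rw [removeBox_of_ne hji]⟩

theorem exists_removableRow_iff (h : IsWeaklyStrict d lam) :
    (∃ i ∈ removableRows d lam, lam i = k + 1) ↔
      (k : ℤ) + 1 ∈ parts d lam ∧ (k ≠ 0 → (k : ℤ) ∉ parts d lam) := by
  constructor
  · rintro ⟨i, hi, hik⟩
    obtain ⟨⟨hi1, hid⟩, hpos, hrow⟩ := mem_removableRows.1 hi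
    refine ⟨⟨i, hi1, hid, by omega⟩, ?_⟩
    rintro hk ⟨j, hj, hjd, hjk⟩
    have hij : i < j := by
      by_contra! hji
      have := h.add_le hj hji hid hpos
      omega
    have := h.add_le (i := i + 1) (by omega) hij hjd (by omega)
    have := hrow (by omega)
    omega
  · rintro ⟨⟨i, hi1, hid, hik⟩, hk⟩
    refine ⟨i, mem_removableRows.2 ⟨⟨hi1, hid⟩, by omega, fun hid' => ?_⟩, by omega⟩
    have hlt := h i hi1 hid'
    by_contra hrow
    exact hk (by omega) ⟨i + 1, by omega, hid', by omega⟩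

/-- The Grassmannian signed permutation of shape `lam`: its positive positions carry increasing
values, and the absolute values of the negative ones are the parts of `lam`. -/
structure IsGrassmannian (n d : ℕ) (lam : ℕ → ℕ) (w : Equiv.Perm ℤ) : Prop where
  isSignedPerm : IsSignedPerm n w
  increasing : ∀ x y, 0 < x → x < y → w x < w y
  inv_neg_iff : ∀ a, 1 ≤ a → (w⁻¹ a < 0 ↔ a ∈ parts d lam)
  isWeaklyStrict : IsWeaklyStrict d lam

namespace IsGrassmannian

theorem isLeftDescent_iff_inv (h : IsGrassmannian n d lam w) :
    IsLeftDescent k w ↔ w⁻¹ (k + 1) < 0 ∧ (k ≠ 0 → 0 < w⁻¹ k) := by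
  have hodd := h.isSignedPerm.inv.1
  unfold IsLeftDescent
  rcases lowerValue_cases k with ⟨rfl, hlow⟩ | ⟨hk, hlow⟩ <;> rw [hlow]
  · rw [hodd]
    simp
  · have hupper : w (w⁻¹ (k + 1)) = k + 1 := Equiv.Perm.eq_inv_iff_eq.1 rfl
    have hlower : w (w⁻¹ k) = k := Equiv.Perm.eq_inv_iff_eq.1 rfl
    have hupper0 : w⁻¹ ((k : ℤ) + 1) ≠ 0 := mt h.isSignedPerm.inv.map_eq_zero_iff.1 (by omega)
    have hlower0 : w⁻¹ (k : ℤ) ≠ 0 := mt h.isSignedPerm.inv.map_eq_zero_iff.1 (by omega)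
    have hpos := h.increasing (w⁻¹ (k + 1)) (w⁻¹ k)
    have hneg := h.increasing (-w⁻¹ k) (-w⁻¹ (k + 1))
    rw [h.isSignedPerm.1, h.isSignedPerm.1] at hneg
    omega

theorem isLeftDescent_iff (h : IsGrassmannian n d lam w) :
    IsLeftDescent k w ↔ ∃ i ∈ removableRows d lam, lam i = k + 1 := by
  rw [h.isLeftDescent_iff_inv, exists_removableRow_iff h.isWeaklyStrict,
    h.inv_neg_iff _ (by omega)]
  refine and_congr_right fun _ => forall_congr' fun hk => ?_
  rw [← h.inv_neg_iff _ (by omega)]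
  have := mt h.isSignedPerm.inv.map_eq_zero_iff.1 (Nat.cast_ne_zero.2 hk)
  omega

theorem increasing_sB_mul (h : IsGrassmannian n d lam w) (hk : IsLeftDescent k w) {x y : ℤ}
    (hx : 0 < x) (hxy : x < y) : (sB k * w) x < (sB k * w) y := by
  have hlt := h.increasing x y hx hxy
  have hne {z : ℤ} (hz : 0 < z) : w z ≠ 0 := mt h.isSignedPerm.map_eq_zero_iff.1 hz.ne'
  refine sB_lt_sB (hne hx) (hne (hx.trans hxy)) hlt fun heq => ?_
  have hinv := (h.isSignedPerm.isLeftDescent_iff_of_lt (heq.symm ▸ hlt)).1 hk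
  rw [heq, Equiv.Perm.inv_eq_iff_eq.2 rfl, Equiv.Perm.inv_eq_iff_eq.2 rfl] at hinv
  omega

theorem sB_mul_inv_neg_iff (h : IsGrassmannian n d lam w) (hk : IsLeftDescent k w) {a : ℤ}
    (ha : 1 ≤ a) : (sB k * w)⁻¹ a < 0 ↔ a = k ∨ a ∈ parts d lam ∧ a ≠ k + 1 := by
  obtain ⟨hupper, hlower⟩ := h.isLeftDescent_iff_inv.1 hk
  have hcases := lowerValue_cases k
  rw [sB_mul_inv_apply]
  obtain rfl | hak := eq_or_ne a (k + 1)
  · have hpos : 0 < w⁻¹ (lowerValue k) := by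
      rcases hcases with ⟨rfl, hlow⟩ | ⟨hk0, hlow⟩ <;> rw [hlow]
      · rw [h.isSignedPerm.inv.1]
        simpa using hupper
      · exact hlower hk0
    rw [sB_succ]
    omega
  · obtain rfl | hak' := eq_or_ne a k
    · have hlow : lowerValue k = k := by omega
      rw [← sB_lowerValue, hlow] at hupper
      exact iff_of_true hupper (.inl rfl)
    · have hfix : sB k a = a := by grind [sB_apply]
      rw [hfix, h.inv_neg_iff a ha]
      tauto

theorem sB_mul (h : IsGrassmannian n d lam w) (hi : i ∈ removableRows d lam) (hik : lam i = k + 1) :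
    IsGrassmannian n d (removeBox lam i) (sB k * w) := by
  have hk := h.isLeftDescent_iff.2 ⟨i, hi, hik⟩
  refine ⟨h.isSignedPerm.sB_mul (h.isSignedPerm.lt_of_isLeftDescent hk),
    fun x y => h.increasing_sB_mul hk, fun a ha => ?_,
    h.isWeaklyStrict.removeBox (mem_removableRows.1 hi).2⟩
  rw [h.sB_mul_inv_neg_iff hk ha, mem_parts_removeBox h.isWeaklyStrict hi, hik, Nat.cast_succ,
    add_sub_cancel_right]

theorem eq_one_iff (h : IsGrassmannian n d lam w) : w = 1 ↔ sizeP d lam = 0 := by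
  constructor
  · rintro rfl
    refine sizeP_eq_zero_iff.2 fun i hi hid => ?_
    by_contra hpos
    have := (h.inv_neg_iff (lam i) (by omega)).2 ⟨i, hi, hid, rfl⟩
    rw [inv_one, Equiv.Perm.one_apply] at this
    omega
  · intro hsize
    by_contra h1
    obtain ⟨k, hk⟩ := h.isSignedPerm.exists_isLeftDescent h1
    obtain ⟨i, hi, hik⟩ := h.isLeftDescent_iff.1 hk
    obtain ⟨⟨hi1, hid⟩, -⟩ := mem_removableRows.1 hi
    have := sizeP_eq_zero_iff.1 hsize i hi1 hid
    omega

theorem redCount_eq_sum (h : IsGrassmannian n d lam w) (hsize : sizeP d lam ≠ 0) :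
    redCount w = ∑ i ∈ removableRows d lam, redCount (sB (lam i - 1) * w) := by
  rw [h.isSignedPerm.redCount_eq_sum (mt h.eq_one_iff.1 hsize)]
  symm
  refine Finset.sum_bij (fun i _ => lam i - 1) (fun i hi => ?_) (fun i hi j hj hij => ?_)
    (fun k hk => ?_) fun _ _ => rfl
  · obtain ⟨-, hpos, -⟩ := mem_removableRows.1 hi
    exact h.isSignedPerm.mem_leftDescents.2 (h.isLeftDescent_iff.2 ⟨i, hi, by omega⟩)
  · obtain ⟨⟨hi1, hid⟩, hipos, -⟩ := mem_removableRows.1 hi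
    obtain ⟨⟨hj1, hjd⟩, hjpos, -⟩ := mem_removableRows.1 hj
    exact h.isWeaklyStrict.eq_of_eq hi1 hid hj1 hjd hipos (by omega)
  · obtain ⟨i, hi, hik⟩ := h.isLeftDescent_iff.1 (h.isSignedPerm.mem_leftDescents.1 hk)
    exact ⟨i, hi, by omega⟩

theorem redCount_eq_card_isSYT (h : IsGrassmannian n d lam w) :
    redCount w = Nat.card {B // IsSYT d lam B} := by
  induction hsize : sizeP d lam generalizing lam w with
  | zero => rw [h.eq_one_iff.2 hsize, redCount_one, card_isSYT_of_sizeP_eq_zero hsize]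
  | succ N ih =>
    have hne : sizeP d lam ≠ 0 := by omega
    rw [h.redCount_eq_sum hne, card_isSYT_eq_sum h.isWeaklyStrict hne]
    refine Finset.sum_congr rfl fun i hi => ?_
    obtain ⟨⟨hi1, hid⟩, hpos, -⟩ := mem_removableRows.1 hi
    have := sizeP_removeBox_add_one hi1 hid hpos
    exact ih (h.sB_mul hi (by omega)) (by omega)

end IsGrassmannian

theorem HasShiftedCode.redCount_eq_card_isSYT (hc : HasShiftedCode w (parts d lam))
    (hw : IsSignedPerm n w) (hlam : IsWeaklyStrict d lam) :
    redCount w = Nat.card {B // IsSYT d lam B} := by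
  obtain ⟨N, u, hu, hcu, hinc, hred⟩ := hc.exists_increasing hw n fun x y hx hxy => by
    rwa [hw.2 x (by rw [lt_abs]; omega), hw.2 y (by rw [lt_abs]; omega)]
  refine hred.trans (IsGrassmannian.redCount_eq_card_isSYT ⟨hu, hinc, fun a ha => ?_, hlam⟩)
  rw [← hcu.exists_map_eq_neg_iff hinc a]
  constructor
  · intro hneg
    have hmap : u (-u⁻¹ a) = -a := by rw [hu.1, Equiv.Perm.eq_inv_iff_eq.1 rfl]
    exact ⟨-u⁻¹ a, by omega, by omega, hmap⟩
  · rintro ⟨q, hq, -, hqa⟩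
    rw [Equiv.Perm.inv_eq_iff_eq.2 (show a = u (-q) by rw [hu.1, hqa, neg_neg])]
    omega

end Grassmannian

/-! ### The permutation `w^λ` -/

section Insertion

variable {u v : Equiv.Perm ℤ} {b m q l : ℤ}

/-- The window of `v` arises from that of `u` by moving the entry at position `m` to position
`b ≤ m`, which shifts the entries at positions `b, …, m - 1` one step to the right. -/
structure IsInsertion (u v : Equiv.Perm ℤ) (b m : ℤ) : Prop where
  one_le : 1 ≤ b
  le : b ≤ m
  map_eq : v b = u m
  map_left : ∀ x, 1 ≤ x → x < b → v x = u x
  map_right : ∀ x, b < x → x ≤ m → v x = u (x - 1)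
  map_beyond : ∀ x, m < x → v x = u x

theorem wordProd_reverse_range'_apply {b m : ℕ} (hb : 1 ≤ b) {x : ℤ} (hx : 1 ≤ x) :
    wordProd (List.range' b m).reverse x =
      if x = b then (b : ℤ) + m else if b < x ∧ x ≤ b + m then x - 1 else x := by
  induction m generalizing b x with
  | zero =>
    have : wordProd (List.range' b 0).reverse = 1 := rfl
    rw [this, Equiv.Perm.one_apply]
    grind
  | succ m ih =>
    have hstep : sB b x = if x = b then (b : ℤ) + 1 else if x = b + 1 then (b : ℤ) else x := by
      have := lowerValue_cases b
      grind [sB_apply]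
    have hpos : 1 ≤ sB b x := by
      rw [hstep]
      split_ifs <;> omega
    rw [List.range'_succ, List.reverse_cons, wordProd_append, Equiv.Perm.mul_apply,
      show wordProd [b] = sB b by simp [wordProd], ih (by omega) hpos, hstep]
    push_cast
    split_ifs <;> omega

theorem isInsertion_mul_wordProd (u : Equiv.Perm ℤ) {b m : ℕ} (hb : 1 ≤ b) :
    IsInsertion u (u * wordProd (List.range' b m).reverse) b (b + m) := by
  have happly {x : ℤ} (hx : 1 ≤ x) := wordProd_reverse_range'_apply (b := b) (m := m) hb hx
  refine ⟨by omega, by omega, ?_, fun x hx hxb => ?_, fun x hbx hxm => ?_, fun x hmx => ?_⟩ <;>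
    rw [Equiv.Perm.mul_apply, happly (by omega)]
  · rw [if_pos rfl]
  · rw [if_neg (by omega), if_neg (by omega)]
  · rw [if_neg (by omega), if_pos ⟨hbx, hxm⟩]
  · rw [if_neg (by omega), if_neg (by omega)]

namespace IsInsertion

theorem exists_eq (h : IsInsertion u v b m) {x : ℤ} (hx : 1 ≤ x) (hxm : x ≤ m) (hxb : x ≠ b) :
    ∃ y, 1 ≤ y ∧ y < m ∧ v x = u y ∧ (x < b ∧ y = x ∨ b < x ∧ y = x - 1) := by
  have := h.one_le
  have := h.le
  rcases hxb.lt_or_gt with hlt | hgt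
  · exact ⟨x, hx, by omega, h.map_left x hx hlt, .inl ⟨hlt, rfl⟩⟩
  · exact ⟨x - 1, by omega, by omega, h.map_right x hgt hxm, .inr ⟨hgt, rfl⟩⟩

theorem exists_isRowAt (h : IsInsertion u v b m) (hrow : IsRowAt u q l) (hqm : q < m)
    (hb : l + u q < b) (hlt : u m < u q) : ∃ p, p ≤ m ∧ v p = u q ∧ IsRowAt v p l := by
  have hvb := h.map_eq
  rcases lt_or_ge q b with hqb | hbq
  · have hvq := h.map_left q hrow.one_le hqb
    refine ⟨q, hqm.le, hvq, hrow.of_lt_iff hvq fun x hx hxq => ?_⟩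
    rw [h.map_left x hx (hxq.trans hqb)]
  · have hvq : v (q + 1) = u q := by rw [h.map_right _ (by omega) hqm, add_sub_cancel_right]
    have hone := hrow.one_le
    refine ⟨q + 1, hqm, hvq, by omega, by rw [hvq]; exact hrow.map_neg,
      by rw [hvq]; exact hrow.nonneg, by have := hrow.lt; omega, fun x hx hxq => ?_⟩
    rw [hvq]
    obtain rfl | hxb := eq_or_ne x b
    · omega
    · obtain ⟨y, hy, -, hvx, hcases⟩ := h.exists_eq hx (by omega) hxb
      have := hrow.lt_iff y hy (by omega)
      omega

end IsInsertion

end Insertion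

section WLam

variable {d r k : ℕ} {lam : ℕ → ℕ} {u v w : Equiv.Perm ℤ}

/-- The state of the window after the runs `d, d - 1, …, d - k + 1` of `a^λ` have acted on
`w^{(d,r)}`: the values `-1, …, -k` have moved into the first `r + k` positions, where `-j` is a
row of length `λ_{d + 1 - j}`. -/
structure IsPartialWLam (d r : ℕ) (lam : ℕ → ℕ) (k : ℕ) (u : Equiv.Perm ℤ) : Prop where
  map_tail : ∀ x : ℤ, r + k < x → x ≤ r + d → u x = -(x - r)
  lt_of_pos : ∀ i j : ℤ, 1 ≤ i → i < j → j ≤ r + k → 0 < u j → u i < u j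
  exists_row : ∀ q : ℤ, 1 ≤ q → q ≤ r + k → u q < 0 →
    ∃ j : ℕ, 1 ≤ j ∧ j ≤ k ∧ u q = -j ∧ IsRowAt u q (lam (d + 1 - j))
  exists_position : ∀ j : ℕ, 1 ≤ j → j ≤ k → ∃ q : ℤ, 1 ≤ q ∧ q ≤ r + k ∧ u q = -j

namespace IsPartialWLam

theorem neg_le (h : IsPartialWLam d r lam k u) {x : ℤ} (hx : 1 ≤ x) (hxk : x ≤ r + k) :
    -(k : ℤ) ≤ u x := by
  by_contra! hlt
  obtain ⟨j, -, hjk, hux, -⟩ := h.exists_row x hx hxk (by omega)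
  omega

theorem isRowAt_insertion (h : IsPartialWLam d r lam k u) {b : ℤ}
    (hv : IsInsertion u v b (r + k + 1)) (hk : k < d) (hb : b + k = lam (d - k)) :
    IsRowAt v b (lam (d - k)) := by
  have hone := hv.one_le
  have hle := hv.le
  have hvb : v b = -(k + 1) := by
    rw [hv.map_eq, h.map_tail _ (by omega) (by omega)]
    ring
  refine ⟨hone, by omega, by omega, by omega, fun x hx hxb => ?_⟩
  have := h.neg_le hx (by omega)
  rw [hv.map_left x hx hxb]
  omega

theorem insertion (h : IsPartialWLam d r lam k u) {b : ℤ} (hv : IsInsertion u v b (r + k + 1))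
    (hlam : IsWeaklyStrict d lam) (hk : k < d) (hb : b + k = lam (d - k)) :
    IsPartialWLam d r lam (k + 1) v := by
  have hone := hv.one_le
  have hle := hv.le
  have hum : u (r + k + 1) = -(k + 1) := by
    rw [h.map_tail _ (by omega) (by omega)]
    ring
  have hvb := hv.map_eq.trans hum
  have hold (q : ℤ) (hq : 1 ≤ q) (hqk : q ≤ r + k) (hneg : u q < 0) : ∃ j : ℕ, 1 ≤ j ∧ j ≤ k ∧
      u q = -j ∧ ∃ p : ℤ, p ≤ r + k + 1 ∧ v p = u q ∧ IsRowAt v p (lam (d + 1 - j)) := by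
    obtain ⟨j, hj, hjk, huq, hrow⟩ := h.exists_row q hq hqk hneg
    have := hrow.nonneg
    have hparts := hlam.add_le (i := d - k) (j := d + 1 - j) (by omega) (by omega) (by omega)
      (by omega)
    exact ⟨j, hj, hjk, huq, hv.exists_isRowAt hrow (by omega) (by omega) (by omega)⟩
  refine ⟨fun x hxk hxd => ?_, fun x y hx hxy hyk hpos => ?_, fun q hq hqk hneg => ?_,
    fun j hj hjk => ?_⟩
  · rw [hv.map_beyond x (by omega), h.map_tail x (by omega) hxd]
  · have hyb : y ≠ b := fun hyb => by rw [hyb] at hpos; omega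
    obtain ⟨y', -, hym, hvy, hycases⟩ := hv.exists_eq (hx.trans hxy.le) (by omega) hyb
    obtain rfl | hxb := eq_or_ne x b
    · omega
    · obtain ⟨x', hx', -, hvx, hxcases⟩ := hv.exists_eq hx (by omega) hxb
      have := h.lt_of_pos x' y' hx' (by omega) (by omega) (by omega)
      omega
  · obtain rfl | hqb := eq_or_ne q b
    · refine ⟨k + 1, by omega, le_rfl, by omega, ?_⟩
      rw [Nat.add_sub_add_right]
      exact h.isRowAt_insertion hv hk hb
    · obtain ⟨y, hy, hym, hvq, -⟩ := hv.exists_eq hq (by omega) hqb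
      obtain ⟨j, hj, hjk, huy, p, -, hvp, hrow⟩ := hold y hy (by omega) (by omega)
      obtain rfl : p = q := v.injective (hvp.trans hvq.symm)
      exact ⟨j, hj, by omega, by omega, hrow⟩
  · obtain rfl | hjk := eq_or_ne j (k + 1)
    · exact ⟨b, hone, by omega, by omega⟩
    · obtain ⟨q, hq, hqk, huq⟩ := h.exists_position j hj (by omega)
      obtain ⟨_, -, -, -, p, hpm, hvp, hrow⟩ := hold q hq hqk (by omega)
      exact ⟨p, hrow.one_le, by omega, by omega⟩

end IsPartialWLam

theorem isPartialWLam_zero (hw : IsWdr d r w) : IsPartialWLam d r lam 0 w := by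
  obtain ⟨-, hfirst, hlast⟩ := hw
  refine ⟨fun x hx hxd => hlast x (by omega) (by omega), fun x y hx hxy hyr _ => ?_,
    fun q hq hqr hneg => ?_, fun j hj hj0 => by omega⟩
  · rw [hfirst x hx (by omega), hfirst y (by omega) (by omega)]
    omega
  · rw [hfirst q hq (by omega)] at hneg
    omega

/-- The run `a^λ_{k + 1}`. -/
def aLamRun (d r : ℕ) (lam : ℕ → ℕ) (k : ℕ) : List ℕ :=
  List.range' (d + r - (k + 1) - muF d r lam (k + 1) + 1) (muF d r lam (k + 1))

theorem aLamWord_eq_flatMap : aLamWord d r lam = (List.range d).flatMap (aLamRun d r lam) := by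
  rw [aLamWord]
  congr 1
  funext k
  rw [aLamRun, List.range'_eq_map_range]

theorem IsStrictPartition.lt_apply_sub (hlam : IsStrictPartition d lam) (hk : k < d) :
    k < lam (d - k) := by
  have := hlam.isWeaklyStrict.add_le (i := d - k) (j := d) (by omega) (by omega) le_rfl hlam.2
  have := hlam.2
  omega

theorem muF_le (hlam : IsStrictPartition d lam) (hk : k < d) :
    muF d r lam (k + 1) + (k + 1) ≤ d + r := by
  have := hlam.lt_apply_sub (k := d - (k + 1)) (by omega)
  rw [show d - (d - (k + 1)) = k + 1 by omega] at this
  unfold muF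
  omega

theorem isSignedPerm_wLam (hlam : IsStrictPartition d lam) (hw : IsWdr d r w) :
    IsSignedPerm (d + r) (w * wordProd (aLamWord d r lam).reverse) := by
  refine hw.1.mul (isSignedPerm_wordProd fun a ha => ?_)
  rw [List.mem_reverse, aLamWord_eq_flatMap, List.mem_flatMap] at ha
  obtain ⟨k, hk, ha⟩ := ha
  rw [List.mem_range] at hk
  rw [aLamRun, List.mem_range'_1] at ha
  have := muF_le (r := r) hlam hk
  omega

theorem isPartialWLam (hlam : IsStrictPartition d lam)
    (hsub : ∀ i, 1 ≤ i → i ≤ d → lam i ≤ Zlam d r i) (hw : IsWdr d r w) (hk : k ≤ d) :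
    IsPartialWLam d r lam k
      (w * wordProd ((List.range' (d - k) k).flatMap (aLamRun d r lam)).reverse) := by
  induction k with
  | zero => simpa [wordProd] using isPartialWLam_zero hw
  | succ k ih =>
    have hrow : d - (k + 1) + 1 = d - k := by omega
    have hlt := hlam.lt_apply_sub hk
    have hle := hsub (d - k) (by omega) (by omega)
    have hmu : muF d r lam (d - k) = r + 2 * d + 1 - 2 * (d - k) - lam (d - k) := rfl
    rw [Zlam] at hle
    rw [List.range'_succ, List.flatMap_cons, List.reverse_append, wordProd_append, ← mul_assoc,
      hrow, aLamRun, hrow]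
    set b := d + r - (d - k) - muF d r lam (d - k) + 1
    have hins := isInsertion_mul_wordProd (b := b) (m := muF d r lam (d - k))
      (w * wordProd ((List.range' (d - k) k).flatMap (aLamRun d r lam)).reverse) (by omega)
    rw [show (b : ℤ) + muF d r lam (d - k) = r + k + 1 by omega] at hins
    exact (ih (by omega)).insertion hins hlam.isWeaklyStrict hk (by omega)

theorem IsPartialWLam.hasShiftedCode (h : IsPartialWLam d r lam d u) (hu : IsSignedPerm (d + r) u) :
    HasShiftedCode u (parts d lam) := by
  have hfix {x : ℤ} (hx : r + d < x) : u x = x := hu.2 x (by rw [lt_abs]; omega)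
  refine ⟨fun x y hx hxy hpos => ?_, fun q hq hneg => ?_, ?_⟩
  · rcases le_or_gt y (r + d) with hy | hy
    · exact h.lt_of_pos x y hx hxy hy hpos
    · rw [hfix hy]
      rcases le_or_gt x (r + d) with hx' | hx'
      · have := hu.abs_apply_le (i := x) (by rw [abs_le]; omega)
        rw [abs_le] at this
        omega
      · rwa [hfix hx']
  · have hqd : q ≤ r + d := by
      by_contra! hqd
      rw [hfix hqd] at hneg
      omega
    obtain ⟨j, hj, hjd, -, hrow⟩ := h.exists_row q hq hqd hneg
    exact ⟨_, ⟨d + 1 - j, by omega, by omega, rfl⟩, hrow⟩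
  · rintro _ ⟨i, hi, hid, rfl⟩
    obtain ⟨q, hq, hqd, huq⟩ := h.exists_position (d + 1 - i) (by omega) (by omega)
    obtain ⟨j, -, hjd, huq', hrow⟩ := h.exists_row q hq hqd (by omega)
    obtain rfl : i = d + 1 - j := by omega
    exact ⟨q, hrow⟩

theorem hasShiftedCode_wLam (hlam : IsStrictPartition d lam)
    (hsub : ∀ i, 1 ≤ i → i ≤ d → lam i ≤ Zlam d r i) (hw : IsWdr d r w) :
    HasShiftedCode (w * wordProd (aLamWord d r lam).reverse) (parts d lam) := by
  have hpartial := isPartialWLam hlam hsub hw le_rfl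
  rw [Nat.sub_self, ← List.range_eq_range', ← aLamWord_eq_flatMap] at hpartial
  exact hpartial.hasShiftedCode (isSignedPerm_wLam hlam hw)

end WLam

/-- `|Red(w^λ)| = |SYT(λ)|`. -/
theorem red_wlam_card_eq_syt_card (d r : ℕ) (hd : 1 ≤ d)
    (lam : ℕ → ℕ) (hlam : IsStrictPartition d lam)
    (hsub : ∀ i : ℕ, 1 ≤ i → i ≤ d → lam i ≤ Zlam d r i)
    (w : Equiv.Perm ℤ) (hw : IsWdr d r w) :
    Nat.card {L : List ℕ //
        IsReducedWord (d + r) (w * wordProd (aLamWord d r lam).reverse) L} =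
      Nat.card {B : ℤ × ℤ → ℕ // IsSYT d lam B} := by
  have hsigned := isSignedPerm_wLam hlam hw
  rw [hsigned.card_isReducedWord]
  exact (hasShiftedCode_wLam hlam hsub hw).redCount_eq_card_isSYT hsigned hlam.isWeaklyStrict

end BST
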